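/- arXiv:2103.12684 — 2 statements merged into one kernel-verified Lean document; each statement's English description precedes it below -/
import Mathlib

section
/- Let q ≥ 17 be a prime number. For i = 1, …, q−1 define S_i : ℝ → ℝ by S_i(x) = ((q−1)/q)·x + i. Then the unique probability measure μ on ℝ satisfying μ = (1/(q−1)) ∑_{i=1}^{q−1} μ ∘ S_i^{−1} is absolutely continuous with respect to Lebesgue measure. -/
open MeasureTheory

section AbsPart
variable {A : Type*} [NormedCommRing A] [NormedAlgebra ℝ A]

theorem mv_step (ρ : ℝ → A) (m : A)
    (hρ : ∀ u, HasDerivAt ρ (-(ρ u * (1 - ρ u))) u) (a b : ℕ) (ha : 1 ≤ a)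
    (v W S C : ℝ) (hW : 0 ≤ W)
    (hC : ‖ρ (v - W) ^ a * (1 - ρ (v - W)) ^ b * m‖ ≤ C)
    (hS : ∀ u, v - W ≤ u → u ≤ v → ‖ρ u ^ (a + 1) * (1 - ρ u) ^ b * m‖ ≤ S) :
    ‖ρ v ^ a * (1 - ρ v) ^ b * m‖ ≤ ((a + b : ℝ) / a) * S + Real.exp (-(a * W)) * C := by
  have ha' : (0 : ℝ) < a := by exact_mod_cast ha
  have hS0 : 0 ≤ S := (norm_nonneg _).trans (hS v (by linarith) le_rfl)
  let f : ℝ → A := fun u => Real.exp (a * (u - v)) • (ρ u ^ a * (1 - ρ u) ^ b * m)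
  let f' : ℝ → A := fun u =>
    ((a + b : ℝ) * Real.exp (a * (u - v))) • (ρ u ^ (a + 1) * (1 - ρ u) ^ b * m)
  have hf : ∀ u, HasDerivAt f (f' u) u := by
    intro u
    have h1 : HasDerivAt (fun u : ℝ => Real.exp (a * (u - v))) (Real.exp (a * (u - v)) * a) u := by
      have : HasDerivAt (fun u : ℝ => a * (u - v)) (a : ℝ) u := by
        simpa using ((hasDerivAt_id u).sub_const v).const_mul (a : ℝ)
      exact this.exp
    have h2 : HasDerivAt (fun u => ρ u ^ a) ((a : A) * ρ u ^ (a - 1) * (-(ρ u * (1 - ρ u)))) u :=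
      (hρ u).pow a
    have h3 : HasDerivAt (fun u => (1 - ρ u) ^ b)
        ((b : A) * (1 - ρ u) ^ (b - 1) * (-(-(ρ u * (1 - ρ u))))) u :=
      ((hρ u).const_sub 1).pow b
    have h4 := h1.smul ((h2.mul h3).mul_const m)
    refine h4.congr_deriv ?_
    have e1 : ρ u ^ (a - 1) * ρ u = ρ u ^ a := by
      rw [← pow_succ]; congr 1; omega
    have e2 : (b : A) * (1 - ρ u) ^ (b - 1) * (1 - ρ u) = (b : A) * (1 - ρ u) ^ b := by
      rcases b with _ | b
      · simp
      · simp only [Nat.add_sub_cancel]; rw [pow_succ]; ring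
    simp only [f']
    have e3 : ((a : A) * ρ u ^ (a - 1) * (-(ρ u * (1 - ρ u))) * (1 - ρ u) ^ b +
        ρ u ^ a * ((b : A) * (1 - ρ u) ^ (b - 1) * (-(-(ρ u * (1 - ρ u)))))) * m
        = ((a : A) + b) * (ρ u ^ (a + 1) * (1 - ρ u) ^ b * m)
          - (a : A) * (ρ u ^ a * (1 - ρ u) ^ b * m) := by
      have : (a : A) * ρ u ^ (a - 1) * (-(ρ u * (1 - ρ u))) = - (a * ρ u ^ a * (1 - ρ u)) := by
        rw [← e1]; ring
      rw [this]
      have : (b : A) * (1 - ρ u) ^ (b - 1) * (-(-(ρ u * (1 - ρ u)))) = b * (1 - ρ u) ^ b * ρ u := by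
        rw [← e2]; ring
      rw [this]; ring
    have e3' := e3
    simp only [Pi.mul_apply] at *
    rw [e3]
    have c1 : ((a : A) + b) = algebraMap ℝ A (a + b : ℝ) := by simp
    have c2 : (a : A) = algebraMap ℝ A (a : ℝ) := by simp
    rw [c1, c2, ← Algebra.smul_def, ← Algebra.smul_def]
    module
  let B : ℝ → ℝ := fun u => ((a + b : ℝ) / a) * S * Real.exp (a * (u - v)) + Real.exp (-(a * W)) * C
  have hB : ∀ u, HasDerivAt B ((a + b : ℝ) * S * Real.exp (a * (u - v))) u := by
    intro u
    have h1 : HasDerivAt (fun u : ℝ => Real.exp (a * (u - v))) (Real.exp (a * (u - v)) * a) u := by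
      have : HasDerivAt (fun u : ℝ => a * (u - v)) (a : ℝ) u := by
        simpa using ((hasDerivAt_id u).sub_const v).const_mul (a : ℝ)
      exact this.exp
    refine ((h1.const_mul (((a + b : ℝ) / a) * S)).add_const _).congr_deriv ?_
    field_simp
  have key := image_norm_le_of_norm_deriv_right_le_deriv_boundary (f := f) (f' := f')
    (a := v - W) (b := v) (B := B)
    (fun u _ => (hf u).continuousAt.continuousWithinAt)
    (fun u _ => (hf u).hasDerivWithinAt) ?_ hB ?_ (x := v) ⟨by linarith, le_rfl⟩
  · simpa [f, B] using key
  · simp only [f, B]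
    rw [norm_smul, Real.norm_eq_abs, abs_of_pos (Real.exp_pos _)]
    have : (a : ℝ) * (v - W - v) = -(a * W) := by ring
    rw [this]
    have h5 : 0 ≤ ((a + b : ℝ) / a) * S * Real.exp (-(a * W)) := by positivity
    have := mul_le_mul_of_nonneg_left hC (Real.exp_pos (-(a * W))).le
    linarith
  · intro u hu
    simp only [f']
    rw [norm_smul, Real.norm_eq_abs, abs_of_nonneg (by positivity)]
    have := mul_le_mul_of_nonneg_left (hS u hu.1 hu.2.le)
      (show 0 ≤ (a + b : ℝ) * Real.exp (a * (u - v)) by positivity)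
    linarith

theorem two_step (ρ : ℝ → A) (m : A)
    (hρ : ∀ u, HasDerivAt ρ (-(ρ u * (1 - ρ u))) u)
    (h1 : ∀ u, ‖ρ u‖ ≤ 1) (h2 : ∀ u, ‖1 - ρ u‖ ≤ 2) (hm : ‖m‖ ≤ 1)
    (k : ℕ) (hk : 1 ≤ k) (v W S : ℝ) (hW : 0 ≤ W) (hδ : 2 * Real.exp (-W) ≤ 1)
    (hS : ∀ u, |u - v| ≤ W → ‖ρ u ^ (k + 1) * (1 - ρ u) ^ (k + 1) * m‖ ≤ S) :
    ‖ρ v ^ k * (1 - ρ v) ^ k * m‖ ≤ (4 + 2 / k) * S + 6 * Real.exp (-W) := by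
  have hk0 : (0 : ℝ) < k := by exact_mod_cast hk
  have gen : ∀ a b : ℕ, 1 ≤ a → ∀ u, ‖ρ u ^ a * (1 - ρ u) ^ b * m‖ ≤ 2 ^ b := by
    intro a b ha u
    have e1 : ‖ρ u ^ a‖ ≤ 1 := (norm_pow_le' _ (by omega)).trans (pow_le_one₀ (norm_nonneg _) (h1 u))
    have e3 : ‖(1 - ρ u) ^ b * m‖ ≤ 2 ^ b := by
      clear ha e1
      induction b with
      | zero => simpa using hm
      | succ n ih =>
        rw [pow_succ', mul_assoc, pow_succ']
        exact (norm_mul_le _ _).trans (mul_le_mul (h2 u) ih (norm_nonneg _) (by norm_num))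
    rw [mul_assoc]
    calc _ ≤ ‖ρ u ^ a‖ * ‖(1 - ρ u) ^ b * m‖ := norm_mul_le _ _
      _ ≤ 1 * 2 ^ b := mul_le_mul e1 e3 (norm_nonneg _) (by norm_num)
      _ = _ := one_mul _
  have hexp : Real.exp (-(k * W)) * 2 ^ k ≤ 2 * Real.exp (-W) := by
    have : Real.exp (-(k * W)) * 2 ^ k = (2 * Real.exp (-W)) ^ k := by
      rw [mul_pow, ← Real.exp_nat_mul]; ring_nf
    rw [this]
    calc _ ≤ (2 * Real.exp (-W)) ^ 1 := pow_le_pow_of_le_one (by positivity) hδ hk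
      _ = _ := pow_one _
  -- inner step
  have inner : ∀ u, v - W ≤ u → u ≤ v → ‖ρ u ^ (k + 1) * (1 - ρ u) ^ k * m‖ ≤
      (2 + 1 / k) * S + 2 * Real.exp (-W) := by
    intro u hu1 hu2
    have hd : ∀ x, HasDerivAt (fun y => 1 - ρ (-y))
        (-((1 - ρ (-x)) * (1 - (1 - ρ (-x))))) x := by
      intro x
      have := ((hρ (-x)).scomp x (hasDerivAt_neg x)).const_sub 1
      refine this.congr_deriv ?_
      simp; ring
    -- window from u to v + something : need |x - v| ≤ W
    have := mv_step (fun y => 1 - ρ (-y)) m hd k (k + 1) hk (-u) W S (2 ^ k) hW ?_ ?_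
    · have h3 : ((k + (k + 1 : ℕ) : ℝ) / k) = 2 + 1 / k := by
        push_cast; field_simp; ring
      rw [h3] at this
      have h4 : ‖ρ u ^ (k + 1) * (1 - ρ u) ^ k * m‖ =
        ‖(1 - ρ (- -u)) ^ k * (1 - (1 - ρ (- -u))) ^ (k + 1) * m‖ := by
          congr 1; simp; ring
      rw [h4]
      linarith
    · have := gen (k + 1) k (by omega) (-(-u - W))
      refine le_trans (le_of_eq ?_) this
      congr 1; ring
    · intro x hx1 hx2
      refine le_trans (le_of_eq ?_) (hS (-x) ?_)
      · congr 1; ring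
      · rw [abs_le]; constructor <;> linarith
  have := mv_step ρ m hρ k k hk v W _ (2 ^ k) hW (gen k k hk _) inner
  have h3 : ((k + k : ℝ) / k) = 2 := by field_simp; ring
  rw [h3] at this
  have h5 : (2 : ℝ) * ((2 + 1 / k) * S + 2 * Real.exp (-W)) + 2 * Real.exp (-W) = 
    (4 + 2 / k) * S + 6 * Real.exp (-W) := by ring
  linarith

theorem chain_step (ρ : ℝ → A) (m : A)
    (hρ : ∀ u, HasDerivAt ρ (-(ρ u * (1 - ρ u))) u)
    (h1 : ∀ u, ‖ρ u‖ ≤ 1) (h2 : ∀ u, ‖1 - ρ u‖ ≤ 2) (hm : ‖m‖ ≤ 1)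
    (v W : ℝ) (hW : 0 ≤ W) (hδ : 2 * Real.exp (-W) ≤ 1) (k : ℕ) (hk : 1 ≤ k) :
    ∀ S : ℝ, (∀ u, |u - v| ≤ k * W → ‖ρ u ^ k * (1 - ρ u) ^ k * m‖ ≤ S) →
    ‖ρ v * (1 - ρ v) * m‖ ≤ k * 4 ^ k * (S + 6 * k * Real.exp (-W)) := by
  induction k, hk using Nat.le_induction with
  | base =>
    intro S hS
    have := hS v (by simp; exact hW)
    have h0 := (norm_nonneg _).trans this
    simp only [pow_one] at this ⊢
    have := Real.exp_pos (-W)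
    push_cast
    nlinarith
  | succ k hk ih =>
    intro S hS
    have hk0 : (1 : ℝ) ≤ k := by exact_mod_cast hk
    have h0 : 0 ≤ S := (norm_nonneg _).trans (hS v (by simp; positivity))
    have := ih ((4 + 2 / k) * S + 6 * Real.exp (-W)) ?_
    · refine this.trans ?_
      have he := Real.exp_pos (-W)
      have e1 : (k : ℝ) * 4 ^ k * ((4 + 2 / k) * S + 6 * Real.exp (-W) + 6 * k * Real.exp (-W)) =
        4 ^ k * ((4 * k + 2) * S + k * (6 * (k + 1) * Real.exp (-W))) := by
          field_simp; ring
      have e2 : ((k + 1 : ℕ) : ℝ) * 4 ^ (k + 1) * (S + 6 * (k + 1 : ℕ) * Real.exp (-W)) =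
        4 ^ k * ((4 * k + 4) * S + (4 * k + 4) * (6 * (k + 1) * Real.exp (-W))) := by
          push_cast; ring
      rw [e1, e2]
      apply mul_le_mul_of_nonneg_left _ (by positivity)
      apply add_le_add
      · nlinarith
      · apply mul_le_mul_of_nonneg_right _ (by positivity)
        linarith
    · intro u hu
      refine two_step ρ m hρ h1 h2 hm k hk u W S hW hδ ?_
      intro x hx
      apply hS
      push_cast
      calc |x - v| ≤ |x - u| + |u - v| := abs_sub_le _ _ _
        _ ≤ _ := by linarith

theorem cauchy_part (ρ : ℝ → A) (m : A)
    (hρ : ∀ u, HasDerivAt ρ (-(ρ u * (1 - ρ u))) u)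
    (h1 : ∀ u, ‖ρ u‖ ≤ 1) (h2 : ∀ u, ‖1 - ρ u‖ ≤ 2) (hm : ‖m‖ ≤ 1)
    (n0 : ℝ) (hn0 : 0 ≤ n0)
    (H : ∀ (B : ℕ) (x : ℝ), n0 * (25 / 3) ^ B ≤ x →
      ‖(ρ (-x) * (1 - ρ (-x))) ^ (40 * B) * m‖ ≤ ((69 / 32 / 40 : ℝ) ^ 20) ^ B) :
    ∃ (x d : ℕ → ℝ), Filter.Tendsto x Filter.atTop Filter.atTop ∧ Summable d ∧
      ∀ B, ‖ρ (-x B) * m - ρ (-x (B + 1)) * m‖ ≤ d B := by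
  set n1 := n0 + 4000 with hn1
  have bound : ∀ B : ℕ, 1 ≤ B → ∀ v, v ≤ -(n1 * (25 / 3) ^ B) →
      ‖ρ v * (1 - ρ v) * m‖ * (25 / 3) ^ B ≤ 40 * B * (1 + 240 * B) * (1 / 2) ^ B := by
    intro B hB v hv
    have hB0 : (1 : ℝ) ≤ B := by exact_mod_cast hB
    have hexp : Real.exp (-(100 * B : ℝ)) ≤ ((1 / 2) ^ 100) ^ B := by
      have : Real.exp (-(100 * B : ℝ)) = (Real.exp (-1) ^ 100) ^ B := by
        rw [← Real.exp_nat_mul, ← Real.exp_nat_mul]; congr 1; push_cast; ring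
      rw [this]
      gcongr
      rw [Real.exp_neg, one_div]
      gcongr
      have := Real.add_one_le_exp (1 : ℝ)
      linarith
    have hsq : (4000 : ℝ) * B ^ 2 ≤ 4000 * (25 / 3) ^ B := by
      have : (B : ℝ) ≤ 2 ^ B := by exact_mod_cast Nat.lt_two_pow_self.le
      have h' : (B : ℝ) ^ 2 ≤ (2 ^ B) ^ 2 := by gcongr
      have : ((2 : ℝ) ^ B) ^ 2 ≤ (25 / 3) ^ B := by
        rw [← pow_mul, mul_comm, pow_mul]; gcongr; norm_num
      linarith
    have hd2 : 2 * Real.exp (-(100 * B : ℝ)) ≤ 1 := by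
      have : ((1 / 2 : ℝ) ^ 100) ^ B ≤ ((1 / 2 : ℝ) ^ 100) ^ 1 :=
        pow_le_pow_of_le_one (by positivity) (by norm_num) hB
      have h3 : ((1 / 2 : ℝ) ^ 100) ^ 1 ≤ 1 / 2 := by norm_num
      linarith
    have := chain_step ρ m hρ h1 h2 hm v (100 * B) (by positivity) hd2 (40 * B) (by omega)
      (((69 / 32 / 40 : ℝ) ^ 20) ^ B) ?_
    · push_cast at this
      have e0 := mul_le_mul_of_nonneg_right this (show (0 : ℝ) ≤ (25 / 3) ^ B by positivity)
      refine e0.trans ?_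
      have a1 : (4 : ℝ) ^ (40 * B) * ((69 / 32 / 40 : ℝ) ^ 20) ^ B * (25 / 3) ^ B ≤ (1 / 2) ^ B := by
        rw [pow_mul, ← mul_pow, ← mul_pow]
        gcongr
        norm_num
      have a2 : (4 : ℝ) ^ (40 * B) * Real.exp (-(100 * B : ℝ)) * (25 / 3) ^ B ≤ (1 / 2) ^ B := by
        calc _ ≤ (4 : ℝ) ^ (40 * B) * ((1 / 2) ^ 100) ^ B * (25 / 3) ^ B := by gcongr
          _ ≤ _ := by
            rw [pow_mul, ← mul_pow, ← mul_pow]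
            gcongr
            norm_num
      have a3 := mul_le_mul_of_nonneg_left a1 (show (0 : ℝ) ≤ 40 * B by positivity)
      have a4 := mul_le_mul_of_nonneg_left a2 (show (0 : ℝ) ≤ 40 * B * (240 * B) by positivity)
      calc _ = 40 * B * ((4 : ℝ) ^ (40 * B) * ((69 / 32 / 40 : ℝ) ^ 20) ^ B * (25 / 3) ^ B) + 
            40 * B * (240 * B) * ((4 : ℝ) ^ (40 * B) * Real.exp (-(100 * B : ℝ)) * (25 / 3) ^ B) := by
              ring
        _ ≤ 40 * B * (1 / 2) ^ B + 40 * B * (240 * B) * (1 / 2) ^ B := add_le_add a3 a4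
        _ = _ := by ring
    · intro u hu
      rw [← mul_pow]
      have := H B (-u) ?_
      · simpa using this
      · push_cast at hu
        have := (abs_le.1 hu).2
        have h6 : n1 * (25 / 3 : ℝ) ^ B = n0 * (25 / 3) ^ B + 4000 * (25 / 3) ^ B := by
          rw [hn1]; ring
        nlinarith
  refine ⟨fun B => n1 * (25 / 3) ^ (B + 1), fun B => n1 * (25 / 3) *
    (40 * (B + 1 : ℕ) * (1 + 240 * (B + 1 : ℕ)) * (1 / 2) ^ (B + 1)), ?_, ?_, ?_⟩
  · refine Filter.Tendsto.const_mul_atTop (by rw [hn1]; positivity) ?_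
    exact (tendsto_pow_atTop_atTop_of_one_lt (by norm_num)).comp (Filter.tendsto_add_atTop_nat 1)
  · apply Summable.mul_left
    apply (summable_nat_add_iff (f := fun B : ℕ => (40 * (B : ℝ) * (1 + 240 * B) * (1 / 2) ^ B)) 1).2
    have s1 := summable_pow_mul_geometric_of_norm_lt_one (R := ℝ) 1 (r := 1 / 2) (by norm_num)
    have s2 := summable_pow_mul_geometric_of_norm_lt_one (R := ℝ) 2 (r := 1 / 2) (by norm_num)
    refine ((s1.mul_left 40).add (s2.mul_left 9600)).congr ?_
    intro b; ring
  · intro B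
    set S := 40 * ((B + 1 : ℕ) : ℝ) * (1 + 240 * (B + 1 : ℕ)) * (1 / 2) ^ (B + 1) / (25 / 3) ^ (B + 1)
    have hn1p : 0 ≤ n1 := by rw [hn1]; positivity
    have hmv := (convex_Icc (-(n1 * (25 / 3 : ℝ) ^ (B + 1 + 1))) (-(n1 * (25 / 3) ^ (B + 1)))).norm_image_sub_le_of_norm_hasDerivWithin_le
      (f := fun u => ρ u * m) (f' := fun u => -(ρ u * (1 - ρ u)) * m) (C := S)
      (x := -(n1 * (25 / 3) ^ (B + 1 + 1))) (y := -(n1 * (25 / 3) ^ (B + 1)))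
      (fun u _ => ((hρ u).mul_const m).hasDerivWithinAt) ?_ ?_ ?_
    · refine hmv.trans ?_
      have : ‖-(n1 * (25 / 3 : ℝ) ^ (B + 1)) - -(n1 * (25 / 3) ^ (B + 1 + 1))‖ ≤ 
          n1 * (25 / 3) ^ (B + 1 + 1) := by
        rw [Real.norm_eq_abs, abs_le]
        have e1 : 0 ≤ n1 * (25 / 3 : ℝ) ^ (B + 1) := by positivity
        have e2 : n1 * (25 / 3 : ℝ) ^ (B + 1 + 1) = (25 / 3) * (n1 * (25 / 3 : ℝ) ^ (B + 1)) := by ring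
        constructor <;> linarith
      calc S * _ ≤ S * (n1 * (25 / 3) ^ (B + 1 + 1)) :=
            mul_le_mul_of_nonneg_left this (by positivity)
        _ = _ := by
          simp only [S]
          rw [pow_succ (25 / 3 : ℝ) (B + 1)]
          field_simp
    · intro u hu
      rw [neg_mul, norm_neg, le_div_iff₀ (by positivity)]
      exact bound (B + 1) (by omega) u hu.2
    · refine ⟨le_rfl, ?_⟩
      have e1 : 0 ≤ n1 * (25 / 3 : ℝ) ^ (B + 1) := by positivity
      have e2 : n1 * (25 / 3 : ℝ) ^ (B + 1 + 1) = (25 / 3) * (n1 * (25 / 3 : ℝ) ^ (B + 1)) := by ring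
      linarith
    · refine ⟨?_, le_rfl⟩
      have e1 : 0 ≤ n1 * (25 / 3 : ℝ) ^ (B + 1) := by positivity
      have e2 : n1 * (25 / 3 : ℝ) ^ (B + 1 + 1) = (25 / 3) * (n1 * (25 / 3 : ℝ) ^ (B + 1)) := by ring
      linarith

end AbsPart

open MeasureTheory
open scoped BoundedContinuousFunction

noncomputable section OpPart

def CB : Type := ℝ →ᵇ ℝ
instance : NormedAddCommGroup CB := inferInstanceAs (NormedAddCommGroup (ℝ →ᵇ ℝ))
instance : NormedSpace ℝ CB := inferInstanceAs (NormedSpace ℝ (ℝ →ᵇ ℝ))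
def CB.ev (f : CB) : ℝ → ℝ := fun x => (show ℝ →ᵇ ℝ from f) x
instance : CoeFun CB (fun _ => ℝ → ℝ) := ⟨CB.ev⟩
theorem CB.continuous (f : CB) : Continuous f := BoundedContinuousFunction.continuous (show ℝ →ᵇ ℝ from f)
theorem CB.norm_coe_le_norm (f : CB) (x : ℝ) : ‖f x‖ ≤ ‖f‖ :=
  BoundedContinuousFunction.norm_coe_le_norm (show ℝ →ᵇ ℝ from f) x
theorem CB.norm_le_of (f : CB) (C : ℝ) (hC : 0 ≤ C) (h : ∀ x, ‖f x‖ ≤ C) : ‖f‖ ≤ C :=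
  (BoundedContinuousFunction.norm_le (f := (show ℝ →ᵇ ℝ from f)) hC).2 h
theorem CB.ext' {f g : CB} (h : ∀ x, f x = g x) : f = g := BoundedContinuousFunction.ext h
theorem CB.add_apply' (f g : CB) (x : ℝ) : (f + g : CB) x = f x + g x := rfl
theorem CB.sub_apply' (f g : CB) (x : ℝ) : (f - g : CB) x = f x - g x := rfl
theorem CB.smul_apply' (c : ℝ) (f : CB) (x : ℝ) : (c • f : CB) x = c * f x := rfl
abbrev OpX := CB →L[ℝ] CB
theorem OpX.ext' {X Y : OpX} (h : ∀ (f : CB) (x : ℝ), X f x = Y f x) : X = Y :=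
  ContinuousLinearMap.ext fun f => CB.ext' (h f)

theorem bcf_integrable (m : Measure ℝ) [IsFiniteMeasure m] (f : CB) (x : ℝ) :
    Integrable (fun y => f (x + y)) m := by
  refine Integrable.of_bound (C := ‖f‖) ?_ ?_
  · exact (f.continuous.comp (by fun_prop)).aestronglyMeasurable
  · exact Filter.Eventually.of_forall fun y => f.norm_coe_le_norm _

def opFun (m : Measure ℝ) [IsProbabilityMeasure m] (f : CB) : CB :=
  BoundedContinuousFunction.ofNormedAddCommGroup (fun x => ∫ y, f (x + y) ∂m)
    (by
      refine continuous_of_dominated (bound := fun _ => ‖f‖) ?_ ?_ ?_ ?_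
      · intro x; exact (bcf_integrable m f x).aestronglyMeasurable
      · intro x; exact Filter.Eventually.of_forall fun y => f.norm_coe_le_norm _
      · exact integrable_const _
      · exact Filter.Eventually.of_forall fun y => f.continuous.comp (by fun_prop))
    ‖f‖
    (by
      intro x
      have := norm_integral_le_of_norm_le_const (μ := m) (f := fun y => f (x + y)) (C := ‖f‖)
        (Filter.Eventually.of_forall fun y => f.norm_coe_le_norm _)
      simpa using this)

def opT (m : Measure ℝ) [IsProbabilityMeasure m] : OpX :=
  LinearMap.mkContinuous
    { toFun := opFun m
      map_add' := by
        intro f g; apply CB.ext'; intro x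
        exact integral_add (bcf_integrable m f x) (bcf_integrable m g x)
      map_smul' := by
        intro c f; apply CB.ext'; intro x
        exact integral_const_mul c _ } 1
    (by
      intro f
      rw [one_mul]
      refine CB.norm_le_of _ _ (norm_nonneg _) fun x => ?_
      change ‖∫ y, f (x + y) ∂m‖ ≤ ‖f‖
      have := norm_integral_le_of_norm_le_const (μ := m) (f := fun y => f (x + y)) (C := ‖f‖)
        (Filter.Eventually.of_forall fun y => f.norm_coe_le_norm _)
      simpa using this)

theorem opT_apply (m : Measure ℝ) [IsProbabilityMeasure m] (f : CB) (x : ℝ) :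
    opT m f x = ∫ y, f (x + y) ∂m := rfl

theorem opT_norm (m : Measure ℝ) [IsProbabilityMeasure m] : ‖opT m‖ ≤ 1 :=
  LinearMap.mkContinuous_norm_le _ zero_le_one _

theorem opT_congr {m n : Measure ℝ} [IsProbabilityMeasure m] [IsProbabilityMeasure n]
    (h : m = n) : opT m = opT n := by
  subst h; rfl

theorem opT_conv (m n : Measure ℝ) [IsProbabilityMeasure m] [IsProbabilityMeasure n] :
    opT (m ∗ n) = opT m * opT n := by
  apply OpX.ext'; intro f x
  change _ = opT m (opT n f) x
  rw [opT_apply, opT_apply]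
  simp_rw [opT_apply]
  rw [Measure.conv, integral_map (by fun_prop)
    (by exact (f.continuous.comp (by fun_prop)).aestronglyMeasurable), integral_prod]
  · simp_rw [add_assoc]
  · refine Integrable.of_bound (C := ‖f‖) ?_ ?_
    · exact (f.continuous.comp (by fun_prop)).aestronglyMeasurable
    · exact Filter.Eventually.of_forall fun y => f.norm_coe_le_norm _

theorem opT_affine (m a b : Measure ℝ) [IsProbabilityMeasure m] [IsProbabilityMeasure a]
    [IsProbabilityMeasure b] (w : ℝ) (h0 : 0 ≤ w) (h1 : w ≤ 1)
    (h : m = ENNReal.ofReal w • a + ENNReal.ofReal (1 - w) • b) :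
    opT m = w • opT a + (1 - w) • opT b := by
  apply OpX.ext'; intro f x
  change opT m f x = w * opT a f x + (1 - w) * opT b f x
  rw [opT_apply, opT_apply, opT_apply]
  conv_lhs => rw [h]
  rw [integral_add_measure, integral_smul_measure, integral_smul_measure,
    ENNReal.toReal_ofReal h0, ENNReal.toReal_ofReal (by linarith)]
  · rfl
  · exact (bcf_integrable a f x).smul_measure ENNReal.ofReal_ne_top
  · exact (bcf_integrable b f x).smul_measure ENNReal.ofReal_ne_top

def opSet : Set (OpX) :=
  {x | ∃ (m : Measure ℝ) (_ : IsProbabilityMeasure m), x = opT m}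

def opAlg : Subalgebra ℝ (OpX) := Algebra.adjoin ℝ opSet

theorem opAlg_comm (a b : opAlg) : a * b = b * a := by
  have := Algebra.isMulCommutative_adjoin ℝ (s := opSet) (by
    rintro _ ⟨m, _, rfl⟩ _ ⟨n, _, rfl⟩
    rw [← opT_conv, ← opT_conv]
    exact opT_congr (Measure.conv_comm _ _))
  exact this.is_comm.comm a b

instance opAlgNCR : NormedCommRing opAlg :=
  { (inferInstance : NormedRing opAlg) with mul_comm := opAlg_comm }

instance opAlgNA : NormedAlgebra ℝ opAlg :=
  { (inferInstance : Algebra ℝ opAlg) with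
    norm_smul_le := fun r x => norm_smul_le r (x : OpX) }

def tA (m : Measure ℝ) [h : IsProbabilityMeasure m] : opAlg :=
  ⟨opT m, Algebra.subset_adjoin ⟨m, h, rfl⟩⟩

theorem coe_tA (m : Measure ℝ) [IsProbabilityMeasure m] : (tA m : OpX) = opT m := rfl

theorem norm_opAlg (x : opAlg) : ‖x‖ = ‖(x : OpX)‖ := rfl

theorem tA_norm (m : Measure ℝ) [IsProbabilityMeasure m] : ‖tA m‖ ≤ 1 := opT_norm m

theorem one_norm : ‖(1 : opAlg)‖ ≤ 1 := by
  rw [norm_opAlg]; exact ContinuousLinearMap.norm_id_le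

theorem tA_congr {m n : Measure ℝ} [IsProbabilityMeasure m] [IsProbabilityMeasure n]
    (h : m = n) : tA m = tA n := by
  subst h; rfl

theorem tA_conv (m n : Measure ℝ) [IsProbabilityMeasure m] [IsProbabilityMeasure n] :
    tA (m ∗ n) = tA m * tA n := Subtype.ext (opT_conv m n)

theorem tA_affine (m a b : Measure ℝ) [IsProbabilityMeasure m] [IsProbabilityMeasure a]
    [IsProbabilityMeasure b] (w : ℝ) (h0 : 0 ≤ w) (h1 : w ≤ 1)
    (h : m = ENNReal.ofReal w • a + ENNReal.ofReal (1 - w) • b) :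
    tA m = w • tA a + (1 - w) • tA b := Subtype.ext (opT_affine m a b w h0 h1 h)

-- dilations
def sc (c : ℝ) (m : Measure ℝ) : Measure ℝ := Measure.map (fun y => c * y) m

instance sc_prob (c : ℝ) (m : Measure ℝ) [IsProbabilityMeasure m] :
    IsProbabilityMeasure (sc c m) := Measure.isProbabilityMeasure_map (by fun_prop)

theorem sc_sc (c d : ℝ) (m : Measure ℝ) : sc c (sc d m) = sc (c * d) m := by
  unfold sc
  rw [Measure.map_map (by fun_prop) (by fun_prop)]
  congr 1; ext y; simp [mul_assoc]

theorem sc_one (m : Measure ℝ) : sc 1 m = m := by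
  unfold sc; simp

theorem sc_conv (c : ℝ) (m n : Measure ℝ) [IsProbabilityMeasure m] [IsProbabilityMeasure n] :
    sc c (m ∗ n) = sc c m ∗ sc c n :=
  Measure.map_conv_addMonoidHom (AddMonoidHom.mulLeft c) (by
    exact measurable_const_mul c)

def dil (c : ℝ) : OpX :=
  LinearMap.mkContinuous
    { toFun := fun f => BoundedContinuousFunction.compContinuous f ⟨fun x => c * x, by fun_prop⟩
      map_add' := by intro f g; rfl
      map_smul' := by intro r f; rfl } 1
    (by
      intro f
      rw [one_mul]
      exact CB.norm_le_of _ _ (norm_nonneg _) fun x => f.norm_coe_le_norm _)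

theorem dil_apply (c : ℝ) (f : CB) (x : ℝ) : dil c f x = f (c * x) := rfl

theorem dil_norm (c : ℝ) : ‖dil c‖ ≤ 1 := LinearMap.mkContinuous_norm_le _ zero_le_one _

theorem dil_mul (c d : ℝ) (h : d * c = 1) : dil c * dil d = 1 := by
  apply OpX.ext'; intro f x
  change f (d * (c * x)) = f x
  rw [← mul_assoc, h, one_mul]

def sg (c : ℝ) (hc : c ≠ 0) : (OpX) →+* (OpX) where
  toFun X := dil c⁻¹ * X * dil c
  map_one' := by rw [mul_one]; exact dil_mul _ _ (mul_inv_cancel₀ hc)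
  map_zero' := by simp
  map_add' := by intro X Y; rw [mul_add, add_mul]
  map_mul' := by
    intro X Y
    have := dil_mul c c⁻¹ (inv_mul_cancel₀ hc)
    calc _ = dil c⁻¹ * X * 1 * Y * dil c := by simp only [mul_one, mul_assoc]
      _ = _ := by rw [← this]; simp only [mul_assoc]

theorem sg_norm (c : ℝ) (hc : c ≠ 0) (X) : ‖sg c hc X‖ ≤ ‖X‖ := by
  change ‖dil c⁻¹ * X * dil c‖ ≤ _
  calc _ ≤ ‖dil c⁻¹ * X‖ * ‖dil c‖ := norm_mul_le _ _
    _ ≤ (‖dil c⁻¹‖ * ‖X‖) * ‖dil c‖ := by gcongr; exact norm_mul_le _ _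
    _ ≤ (1 * ‖X‖) * 1 := by gcongr <;> exact dil_norm _
    _ = _ := by ring

theorem sg_opT (c : ℝ) (hc : c ≠ 0) (m : Measure ℝ) [IsProbabilityMeasure m] :
    sg c hc (opT m) = opT (sc c m) := by
  apply OpX.ext'; intro f x
  change (opT m (dil c f)) (c⁻¹ * x) = _
  rw [opT_apply, opT_apply, sc, integral_map (by fun_prop)
    (by exact (f.continuous.comp (by fun_prop)).aestronglyMeasurable)]
  simp_rw [dil_apply, mul_add, mul_inv_cancel_left₀ hc]

-- exponential kernels
def E1 : Measure ℝ := (volume.restrict (Set.Ioi 0)).withDensity fun y => ENNReal.ofReal (Real.exp (-y))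

instance E1_prob : IsProbabilityMeasure E1 := by
  constructor
  rw [E1, withDensity_apply _ MeasurableSet.univ, Measure.restrict_univ,
    ← ofReal_integral_eq_lintegral_ofReal]
  · rw [integral_exp_neg_Ioi_zero]; simp
  · exact integrableOn_exp_neg_Ioi 0
  · exact Filter.Eventually.of_forall fun y => (Real.exp_pos _).le

def Et (t : ℝ) : Measure ℝ := sc t E1

instance Et_prob (t : ℝ) : IsProbabilityMeasure (Et t) := by unfold Et; infer_instance

theorem charFun_E1 (ξ : ℝ) : charFun E1 ξ = 1 / (1 - Complex.I * ξ) := by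
  rw [charFun_apply_real, E1, integral_withDensity_eq_integral_toReal_smul (by fun_prop)
    (Filter.Eventually.of_forall fun y => by simp)]
  have := integral_exp_mul_complex_Ioi (a := Complex.I * ξ - 1) (by simp) 0
  simp only [Complex.ofReal_zero, mul_zero, Complex.exp_zero] at this
  have h2 : (1 : ℂ) - Complex.I * ξ ≠ 0 := by
    intro h; have := congrArg Complex.re h; simp at this
  calc _ = ∫ x : ℝ in Set.Ioi 0, Complex.exp ((Complex.I * ξ - 1) * x) := by
        congr 1; ext y
        rw [ENNReal.toReal_ofReal (Real.exp_pos _).le, Complex.real_smul, Complex.ofReal_exp,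
          ← Complex.exp_add]
        congr 1; push_cast; ring
    _ = _ := by
        rw [this, ← neg_sub, div_neg, neg_div, neg_neg]

theorem charFun_Et (t ξ : ℝ) : charFun (Et t) ξ = 1 / (1 - Complex.I * (t * ξ)) := by
  rw [Et, sc, charFun_map_mul, charFun_E1]; push_cast; rfl

theorem resolvent_meas (s t : ℝ) (hs : 0 < s) (hst : s ≤ t) :
    Et t = ENNReal.ofReal (s / t) • Et s + ENNReal.ofReal (1 - s / t) • (Et s ∗ Et t) := by
  have ht : 0 < t := hs.trans_le hst
  have hf1 : IsFiniteMeasure (ENNReal.ofReal (s / t) • Et s) := Measure.smul_finite _ (by simp)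
  have hf2 : IsFiniteMeasure (ENNReal.ofReal (1 - s / t) • (Et s ∗ Et t)) :=
    Measure.smul_finite _ (by simp)
  apply Measure.ext_of_charFun
  ext ξ
  have int : ∀ m : Measure ℝ, IsProbabilityMeasure m → 
      Integrable (fun x : ℝ => Complex.exp (ξ * x * Complex.I)) m := by
    intro m _
    refine Integrable.of_bound (C := 1) (by fun_prop) ?_
    refine Filter.Eventually.of_forall fun y => ?_
    rw [← Complex.ofReal_mul, Complex.norm_exp_ofReal_mul_I]
  have e : charFun (ENNReal.ofReal (s / t) • Et s + ENNReal.ofReal (1 - s / t) • (Et s ∗ Et t)) ξ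
     = (s / t : ℝ) • charFun (Et s) ξ + (1 - s / t : ℝ) • charFun (Et s ∗ Et t) ξ := by
    rw [charFun_apply_real, charFun_apply_real, charFun_apply_real, integral_add_measure,
      integral_smul_measure, integral_smul_measure,
      ENNReal.toReal_ofReal (by positivity), ENNReal.toReal_ofReal]
    · rw [sub_nonneg, div_le_one ht]; exact hst
    · exact (int _ inferInstance).smul_measure (by simp)
    · exact (int _ inferInstance).smul_measure (by simp)
  rw [e, charFun_conv, charFun_Et, charFun_Et, Complex.real_smul, Complex.real_smul]
  have h2 : ∀ r : ℝ, (1 : ℂ) - Complex.I * (r * ξ) ≠ 0 := by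
    intro r h; have := congrArg Complex.re h; simp at this
  have h3 := h2 s
  have h4 := h2 t
  have h6 : (t : ℂ) * (1 - Complex.I * (s * ξ)) - s * (1 - Complex.I * (t * ξ)) = t - s := by ring
  have h5 : (t : ℂ) ≠ 0 := by exact_mod_cast ht.ne'
  push_cast
  generalize (1 : ℂ) - Complex.I * (s * ξ) = a at *
  generalize (1 : ℂ) - Complex.I * (t * ξ) = b at *
  field_simp
  linear_combination h6

def R (t : ℝ) : opAlg := tA (Et t)

theorem resolvent_le (s t : ℝ) (hs : 0 < s) (hst : s ≤ t) :
    R t = (s / t) • R s + (1 - s / t) • (R s * R t) := by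
  have ht : 0 < t := hs.trans_le hst
  have := tA_affine _ _ _ (s / t) (by positivity) ((div_le_one ht).2 hst) (resolvent_meas s t hs hst)
  rw [tA_conv] at this
  exact this

theorem resolv (s t : ℝ) (hs : 0 < s) (ht : 0 < t) :
    R s - R t = (1 - s / t) • (R s * (1 - R t)) := by
  rcases le_total s t with h | h
  · have := resolvent_le s t hs h
    generalize hw : s / t = w at *
    rw [mul_sub, mul_one, smul_sub]
    conv_lhs => rw [this]
    module
  · have hR := resolvent_le t s ht h
    have hw : s / t = (t / s)⁻¹ := by rw [inv_div]
    rw [hw]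
    have hp : t / s ≠ 0 := by positivity
    generalize t / s = w at *
    have e : w • (R s - R t) = w • ((1 - w⁻¹) • (R s * (1 - R t))) := by
      rw [smul_smul]
      have : w * (1 - w⁻¹) = -(1 - w) := by field_simp; ring
      rw [this, mul_sub, mul_one, mul_comm (R s) (R t)]
      have h3 : (1 - w) • (R t * R s) = R s - w • R t := by
        rw [eq_sub_iff_add_eq, add_comm]; exact hR.symm
      rw [smul_sub, neg_smul, smul_sub, h3]
      module
    exact (smul_right_injective _ hp) e

theorem R_norm (t : ℝ) : ‖R t‖ ≤ 1 := tA_norm _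
theorem R_norm' (t : ℝ) : ‖1 - R t‖ ≤ 2 := by
  have := norm_sub_le (1 : opAlg) (R t)
  linarith [one_norm, R_norm t]

theorem R_deriv (v : ℝ) : HasDerivAt (fun u => R (Real.exp u))
    (-(R (Real.exp v) * (1 - R (Real.exp v)))) v := by
  have id : ∀ u, R (Real.exp u) - R (Real.exp v) =
      (1 - Real.exp (u - v)) • (R (Real.exp u) * (1 - R (Real.exp v))) := by
    intro u
    rw [resolv _ _ (Real.exp_pos u) (Real.exp_pos v), Real.exp_sub]
  have hφ : HasDerivAt (fun u => 1 - Real.exp (u - v)) (-1) v := by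
    have := (((hasDerivAt_id v).sub_const v).exp).const_sub 1
    simpa using this
  have hc : Filter.Tendsto (fun u => R (Real.exp u)) (nhds v) (nhds (R (Real.exp v))) := by
    rw [tendsto_iff_norm_sub_tendsto_zero]
    have h0 : Filter.Tendsto (fun u => |1 - Real.exp (u - v)| * 2) (nhds v) (nhds 0) := by
      have := (hφ.continuousAt.abs.mul_const 2).tendsto
      simpa using this
    refine squeeze_zero (fun _ => norm_nonneg _) (fun u => ?_) h0
    rw [id u, norm_smul, Real.norm_eq_abs]
    gcongr
    calc _ ≤ ‖R (Real.exp u)‖ * ‖1 - R (Real.exp v)‖ := norm_mul_le _ _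
      _ ≤ 1 * 2 := mul_le_mul (R_norm _) (R_norm' _) (norm_nonneg _) (by norm_num)
      _ = 2 := by norm_num
  rw [hasDerivAt_iff_tendsto_slope]
  have h1 := (hasDerivAt_iff_tendsto_slope.1 hφ)
  have h2 := h1.smul ((hc.mul_const (1 - R (Real.exp v))).mono_left (nhdsWithin_le_nhds (s := {v}ᶜ)))
  rw [neg_one_smul] at h2
  refine h2.congr fun u => ?_
  simp only [slope_def_module, id u, smul_smul]
  simp

def Yy (t : ℝ) : opAlg := R t * (1 - R t)

theorem Yy_scale (c t : ℝ) (hc : 0 < c) (k : ℕ) (m : Measure ℝ) [IsProbabilityMeasure m] :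
    ‖Yy t ^ k * tA (sc c m)‖ ≤ ‖Yy (t / c) ^ k * tA m‖ := by
  have hE : Et t = sc c (Et (t / c)) := by
    rw [Et, Et, sc_sc]; congr 1; field_simp
  have e : ((Yy t ^ k * tA (sc c m) : opAlg) : OpX) =
      sg c hc.ne' ((Yy (t / c) ^ k * tA m : opAlg) : OpX) := by
    have h1 : ((R t : opAlg) : OpX) = sg c hc.ne' (opT (Et (t / c))) := by
      rw [sg_opT]; exact opT_congr hE
    have cm : ∀ x y : opAlg, ((x * y : opAlg) : OpX) = x * y := fun _ _ => rfl
    have cp : ∀ x : opAlg, ((x ^ k : opAlg) : OpX) = x ^ k := fun _ => rfl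
    have cs : ∀ x : opAlg, ((1 - x : opAlg) : OpX) = 1 - x := fun _ => rfl
    rw [cm, cm, cp, cp, Yy, Yy, cm, cm, cs, cs, h1, coe_tA, coe_tA, R, coe_tA]
    rw [map_mul, map_pow, map_mul, map_sub, map_one, sg_opT c hc.ne' m]
  rw [norm_opAlg, e]
  exact sg_norm _ _ _

theorem Et_tendsto (g : CB) (x : ℕ → ℝ) (hx : Filter.Tendsto x Filter.atTop (nhds 0)) :
    Filter.Tendsto (fun n => opT (Et (x n)) g 0) Filter.atTop (nhds (g 0)) := by
  have : ∀ n, opT (Et (x n)) g 0 = ∫ y, g (x n * y) ∂E1 := by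
    intro n
    rw [opT_apply, Et, sc, integral_map (by fun_prop)
      (by exact (g.continuous.comp (by fun_prop)).aestronglyMeasurable)]
    simp
  simp_rw [this]
  have h0 : g 0 = ∫ y, g 0 ∂E1 := by simp
  rw [h0]
  refine tendsto_integral_of_dominated_convergence (fun _ => ‖g‖) ?_ (integrable_const _) ?_ ?_
  · intro n; exact (g.continuous.comp (by fun_prop)).aestronglyMeasurable
  · intro n; exact Filter.Eventually.of_forall fun y => g.norm_coe_le_norm _
  · refine Filter.Eventually.of_forall fun y => ?_
    have : Filter.Tendsto (fun n => x n * y) Filter.atTop (nhds 0) := by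
      simpa using hx.mul_const y
    exact (g.continuous.tendsto 0).comp this

end OpPart

open MeasureTheory

theorem log_lb (x : ℝ) (hx : 0 < x) : (5*x^2-4*x-1)/(2*x^2+4*x) ≤ Real.log x := by
  set L : ℝ → ℝ := fun x => Real.log x - (5*x^2-4*x-1)/(2*x^2+4*x) with hL
  have hd : ∀ y : ℝ, 0 < y → HasDerivAt L ((y-1)^3/(y^2*(y+2)^2)) y := by
    intro y hy
    have h1 := Real.hasDerivAt_log hy.ne'
    have h2 : HasDerivAt (fun x : ℝ => 5*x^2-4*x-1) (10*y-4) y := by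
      have := (((hasDerivAt_pow 2 y).const_mul 5).sub ((hasDerivAt_id y).const_mul 4)).sub_const 1
      exact this.congr_deriv (by norm_num; try ring)
    have h3 : HasDerivAt (fun x : ℝ => 2*x^2+4*x) (4*y+4) y := by
      have := (((hasDerivAt_pow 2 y).const_mul 2).add ((hasDerivAt_id y).const_mul 4))
      exact this.congr_deriv (by norm_num; try ring)
    have h0 : 2*y^2+4*y ≠ 0 := by positivity
    have := h1.sub (h2.div h3 h0)
    refine this.congr_deriv ?_
    field_simp
    ring
  have hc : ∀ y : ℝ, 0 < y → ContinuousAt L y := fun y hy => (hd y hy).continuousAt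
  have hL1 : L 1 = 0 := by simp [hL]; norm_num
  suffices h : L 1 ≤ L x by rw [hL1] at h; simp only [hL] at h; linarith
  rcases le_total x 1 with h | h
  · have : AntitoneOn L (Set.Icc x 1) := by
      apply antitoneOn_of_deriv_nonpos (convex_Icc _ _)
      · exact fun y hy => (hc y (by linarith [hy.1])).continuousWithinAt
      · exact fun y hy => by
          rw [interior_Icc] at hy
          exact (hd y (by linarith [hy.1])).differentiableAt.differentiableWithinAt
      · intro y hy
        rw [interior_Icc] at hy
        have hy0 : 0 < y := by linarith [hy.1]
        rw [(hd y hy0).deriv]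
        apply div_nonpos_of_nonpos_of_nonneg _ (by positivity)
        have : 0 ≤ (1-y)^3 := pow_nonneg (by linarith [hy.2]) 3
        nlinarith
    exact this ⟨le_rfl, h⟩ ⟨h, le_rfl⟩ h
  · have : MonotoneOn L (Set.Icc 1 x) := by
      apply monotoneOn_of_deriv_nonneg (convex_Icc _ _)
      · exact fun y hy => (hc y (by linarith [hy.1])).continuousWithinAt
      · exact fun y hy => by
          rw [interior_Icc] at hy
          exact (hd y (by linarith [hy.1])).differentiableAt.differentiableWithinAt
      · intro y hy
        rw [interior_Icc] at hy
        have hy0 : 0 < y := by linarith [hy.1]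
        rw [(hd y hy0).deriv]
        have : 0 ≤ (y-1)^3 := pow_nonneg (by linarith [hy.1]) 3
        positivity
    exact this ⟨le_rfl, h⟩ ⟨h, le_rfl⟩ h

theorem pins1 (a m c : ℝ) (ha : 0 ≤ a) (hm : 0 < m) :
    c*|a-m| - c^2*(a+2*m)/6 ≤ a * Real.log a - a * Real.log m - a + m := by
  have hS : 0 < a + 2*m := by linarith
  have h1 : c*|a-m| - c^2*(a+2*m)/6 ≤ 3*(a-m)^2/(2*(a+2*m)) := by
    rw [le_div_iff₀ (by positivity), ← sq_abs (a-m)]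
    nlinarith [sq_nonneg (c*(a+2*m) - 3*|a-m|)]
  refine h1.trans ?_
  rcases ha.eq_or_lt with h | h
  · subst h
    simp only [zero_mul, zero_sub, zero_add, neg_zero]
    rw [div_le_iff₀ (by positivity)]
    nlinarith [sq_nonneg m]
  · have h2 := log_lb (a/m) (by positivity)
    rw [Real.log_div h.ne' hm.ne'] at h2
    have h3 := mul_le_mul_of_nonneg_left h2 ha
    have h4 : a * ((5*(a/m)^2-4*(a/m)-1)/(2*(a/m)^2+4*(a/m))) - a + m = 3*(a-m)^2/(2*(a+2*m)) := by
      field_simp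
      ring
    linarith

theorem pins2 (w N a b f : ℝ) (hw0 : 0 < w) (hw1 : w < 1) (ha : 0 ≤ a) (hb : 0 ≤ b)
    (hf : f = w*a+(1-w)*b) :
    w * Real.negMulLog a + (1-w) * Real.negMulLog b + w*(1-w)*N*|a-b|
      - (w*((1-w)*N)^2*(a+2*f)/6 + (1-w)*(w*N)^2*(b+2*f)/6) ≤ Real.negMulLog f := by
  have hw' : 0 < 1 - w := by linarith
  have h1a := mul_nonneg hw0.le ha
  have h1b := mul_nonneg hw'.le hb
  have hf0 : 0 ≤ f := by linarith
  rcases hf0.eq_or_lt with h | h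
  · have ha0 : w * a = 0 := by linarith
    have hb0 : (1-w) * b = 0 := by linarith
    have ha0 : a = 0 := by rcases mul_eq_zero.1 ha0 with h | h <;> linarith
    have hb0 : b = 0 := by rcases mul_eq_zero.1 hb0 with h | h <;> linarith
    subst ha0 hb0
    simp [← h]
  · have e1 := mul_le_mul_of_nonneg_left (pins1 a f ((1-w)*N) ha h) hw0.le
    have e2 := mul_le_mul_of_nonneg_left (pins1 b f (w*N) hb h) hw'.le
    have a1 : |a-f| = (1-w)*|a-b| := by
      rw [← abs_of_pos hw', ← abs_mul, hf]; congr 1; ring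
    have a2 : |b-f| = w*|a-b| := by
      rw [← abs_of_pos hw0, ← abs_mul, hf, abs_sub_comm]; congr 1; ring
    rw [a1] at e1; rw [a2] at e2
    simp only [Real.negMulLog]
    have : f * Real.log f = w * (a * Real.log f) + (1-w)*(b*Real.log f) := by
      nth_rw 1 [hf]; ring
    have e3 : w * f + (1-w)*f = w*a+(1-w)*b := by linarith
    nlinarith

/-- Gibbs type bound -/
theorem gibbs_pt (h p : ℝ) (h0 : 0 ≤ h) (hp : 0 < p) :
    Real.negMulLog h ≤ - h * Real.log p + p - h := by
  have := pins1 h p 0 h0 hp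
  simp only [Real.negMulLog]
  simp at this
  linarith

open MeasureTheory

noncomputable section EntPart

structure Dn (V m : Measure ℝ) (h : ℝ → ℝ) : Prop where
  meas : Measurable h
  nn : ∀ y, 0 ≤ h y
  le1 : ∀ y, h y ≤ 1
  eq : m = V.withDensity (fun y => ENNReal.ofReal (h y))

theorem Dn.exists' (V m : Measure ℝ) [SigmaFinite V] [IsFiniteMeasure m] (hle : m ≤ V) :
    ∃ h, Dn V m h := by
  have hac : m ≪ V := Measure.absolutelyContinuous_of_le hle
  refine ⟨fun y => min 1 (m.rnDeriv V y).toReal, ?_, ?_, ?_, ?_⟩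
  · exact measurable_const.min (Measure.measurable_rnDeriv _ _).ennreal_toReal
  · intro y; positivity
  · intro y; exact min_le_left _ _
  · rw [← Measure.withDensity_rnDeriv_eq m V hac]
    apply withDensity_congr_ae
    filter_upwards [Measure.rnDeriv_le_one_of_le hle] with y hy
    have h1 : m.rnDeriv V y ≤ 1 := hy
    rw [Measure.withDensity_rnDeriv_eq m V hac]
    have h2 : (m.rnDeriv V y).toReal ≤ 1 := by
      have := ENNReal.toReal_mono ENNReal.one_ne_top h1
      simpa using this
    rw [min_eq_right h2, ENNReal.ofReal_toReal (ne_top_of_le_ne_top ENNReal.one_ne_top h1)]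

theorem Dn.lintegral {V m : Measure ℝ} {h : ℝ → ℝ} (H : Dn V m h) (f : ℝ → ENNReal)
    (hf : Measurable f) : ∫⁻ y, f y ∂m = ∫⁻ y, ENNReal.ofReal (h y) * f y ∂V := by
  rw [H.eq, lintegral_withDensity_eq_lintegral_mul _ H.meas.ennreal_ofReal hf]; rfl

theorem Dn.integrable {V m : Measure ℝ} {h : ℝ → ℝ} [IsProbabilityMeasure m] (H : Dn V m h) :
    Integrable h V := by
  refine ⟨H.meas.aestronglyMeasurable, ?_⟩
  rw [hasFiniteIntegral_iff_ofReal (Filter.Eventually.of_forall H.nn)]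
  have := H.lintegral (fun _ => 1) measurable_const
  simp at this
  rw [← this]; exact ENNReal.one_lt_top

theorem Dn.integral_one {V m : Measure ℝ} {h : ℝ → ℝ} [IsProbabilityMeasure m] (H : Dn V m h) :
    ∫ y, h y ∂V = 1 := by
  rw [integral_eq_lintegral_of_nonneg_ae (Filter.Eventually.of_forall H.nn)
    H.meas.aestronglyMeasurable]
  have := H.lintegral (fun _ => 1) measurable_const
  simp at this
  rw [← this]; rfl

theorem Dn.integral {V m : Measure ℝ} {h : ℝ → ℝ} (H : Dn V m h) (f : ℝ → ℝ) :
    ∫ y, f y ∂m = ∫ y, h y * f y ∂V := by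
  rw [H.eq, integral_withDensity_eq_integral_toReal_smul H.meas.ennreal_ofReal
    (Filter.Eventually.of_forall fun y => ENNReal.ofReal_lt_top)]
  congr 1; ext y
  rw [ENNReal.toReal_ofReal (H.nn y), smul_eq_mul]

theorem Dn.integrable_iff {V m : Measure ℝ} {h : ℝ → ℝ} (H : Dn V m h) (f : ℝ → ℝ) 
    (hf : Integrable f m) : Integrable (fun y => h y * f y) V := by
  rw [H.eq, integrable_withDensity_iff_integrable_smul' H.meas.ennreal_ofReal
    (Filter.Eventually.of_forall fun y => ENNReal.ofReal_lt_top)] at hf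
  refine hf.congr (Filter.Eventually.of_forall fun y => ?_)
  simp only
  rw [ENNReal.toReal_ofReal (H.nn y), smul_eq_mul]

theorem bdd_integrable (n : Measure ℝ) [IsFiniteMeasure n] (h : ℝ → ℝ) (hm : Measurable h)
    (C : ℝ) (h1 : ∀ y, 0 ≤ h y) (h2 : ∀ y, h y ≤ C) (y : ℝ) : Integrable (fun u => h (y - u)) n := by
  refine Integrable.of_bound (C := C) ?_ ?_
  · exact (hm.comp (by fun_prop)).aestronglyMeasurable
  · exact Filter.Eventually.of_forall fun y => by
      rw [Real.norm_eq_abs, abs_of_nonneg (h1 _)]; exact h2 _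

theorem swap_shift (V n : Measure ℝ) [SFinite V] [V.IsAddLeftInvariant] [SFinite n]
    (F : ℝ → ENNReal) (hF : Measurable F) (G : ℝ → ENNReal) (hG : Measurable G) :
    ∫⁻ y, (∫⁻ u, F (y - u) ∂n) * G y ∂V = ∫⁻ u, ∫⁻ y, F y * G (y + u) ∂V ∂n := by
  have : ∀ y, (∫⁻ u, F (y - u) ∂n) * G y = ∫⁻ u, F (y - u) * G y ∂n := by
    intro y; rw [lintegral_mul_const (G y) (f := fun u => F (y - u)) (by fun_prop)]
  simp_rw [this]
  rw [lintegral_lintegral_swap]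
  · congr 1; ext u
    rw [← lintegral_sub_right_eq_self (fun y => F y * G (y + u)) u]
    simp
  · apply Measurable.aemeasurable
    exact (hF.comp (by fun_prop)).mul (hG.comp (by fun_prop))

theorem Dn.conv {V m : Measure ℝ} {h : ℝ → ℝ} [SFinite V] [V.IsAddLeftInvariant] 
    [IsProbabilityMeasure m] (H : Dn V m h)
    (n : Measure ℝ) [IsProbabilityMeasure n] :
    Dn V (m.conv n) (fun y => ∫ u, h (y - u) ∂n) := by
  have hm2 : Measurable fun p : ℝ × ℝ => h (p.1 - p.2) := H.meas.comp (by fun_prop)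
  refine ⟨?_, ?_, ?_, ?_⟩
  · exact (hm2.stronglyMeasurable.integral_prod_right).measurable
  · intro y; exact integral_nonneg fun u => H.nn _
  · intro y
    calc _ ≤ ∫ u, (1:ℝ) ∂n := integral_mono (bdd_integrable n h H.meas 1 H.nn H.le1 y)
          (integrable_const _) (fun u => H.le1 _)
      _ = 1 := by simp
  · have e : ∀ y, ENNReal.ofReal (∫ u, h (y - u) ∂n) = ∫⁻ u, ENNReal.ofReal (h (y-u)) ∂n := by
      intro y
      exact ofReal_integral_eq_lintegral_ofReal (bdd_integrable n h H.meas 1 H.nn H.le1 y)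
        (Filter.Eventually.of_forall fun u => H.nn _)
    simp_rw [e]
    have hm3 : Measurable fun y => ∫⁻ u, ENNReal.ofReal (h (y-u)) ∂n :=
      (hm2.ennreal_ofReal).lintegral_prod_right'
    apply Measure.ext_of_lintegral
    intro f hf
    rw [lintegral_withDensity_eq_lintegral_mul _ hm3 hf]
    simp only [Pi.mul_apply]
    rw [swap_shift V n (fun y => ENNReal.ofReal (h y)) H.meas.ennreal_ofReal f hf,
      Measure.lintegral_conv hf, lintegral_lintegral_swap (by fun_prop)]
    congr 1; ext u
    rw [H.lintegral (fun x => f (x+u)) (by fun_prop)]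

def Phi (V m : Measure ℝ) : ℝ := ∫ y, Real.negMulLog ((m.rnDeriv V y).toReal) ∂V

theorem Dn.Phi_eq {V m : Measure ℝ} {h : ℝ → ℝ} [SigmaFinite V] (H : Dn V m h) :
    Phi V m = ∫ y, Real.negMulLog (h y) ∂V := by
  unfold Phi
  have := Measure.rnDeriv_withDensity V H.meas.ennreal_ofReal
  rw [← H.eq] at this
  apply integral_congr_ae
  filter_upwards [this] with y hy
  rw [hy, ENNReal.toReal_ofReal (H.nn y)]

theorem Dn.nml_nonneg {V m : Measure ℝ} {h : ℝ → ℝ} (H : Dn V m h) (y : ℝ) :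
    0 ≤ Real.negMulLog (h y) := Real.negMulLog_nonneg (H.nn y) (H.le1 y)

theorem Dn.Phi_nonneg {V m : Measure ℝ} {h : ℝ → ℝ} [SigmaFinite V] (H : Dn V m h) :
    0 ≤ Phi V m := by
  rw [H.Phi_eq]; exact integral_nonneg H.nml_nonneg

def mom (m : Measure ℝ) : ENNReal := ∫⁻ y, ‖y‖ₑ ∂m

theorem mom_conv (m n : Measure ℝ) [IsProbabilityMeasure m] [IsProbabilityMeasure n] :
    mom (m.conv n) ≤ mom m + mom n := by
  unfold mom
  rw [Measure.lintegral_conv (by fun_prop)]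
  calc _ ≤ ∫⁻ x, (∫⁻ y, (‖x‖ₑ + ‖y‖ₑ) ∂n) ∂m := by
        gcongr with x y; exact enorm_add_le _ _
    _ = ∫⁻ x, (‖x‖ₑ + ∫⁻ y, ‖y‖ₑ ∂n) ∂m := by
        congr 1; ext x; rw [lintegral_add_left (by fun_prop)]; simp
    _ = _ := by rw [lintegral_add_left (by fun_prop)]; simp

theorem mom_sc (c : ℝ) (m : Measure ℝ) : mom (sc c m) = ‖c‖ₑ * mom m := by
  unfold mom sc
  rw [lintegral_map (by fun_prop) (by fun_prop), ← lintegral_const_mul _ (by fun_prop)]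
  simp [enorm_mul]

theorem mom_E1 : mom E1 ≠ ⊤ := by
  unfold mom E1
  rw [lintegral_withDensity_eq_lintegral_mul _ (by fun_prop) (by fun_prop)]
  have h := (Real.GammaIntegral_convergent (s := 2) (by norm_num))
  rw [IntegrableOn] at h
  have h2 := h.2
  rw [hasFiniteIntegral_iff_enorm] at h2
  refine ne_top_of_le_ne_top h2.ne (lintegral_mono_ae ?_)
  filter_upwards [ae_restrict_mem measurableSet_Ioi] with y hy
  have hy : 0 < y := hy
  simp only [Pi.mul_apply]
  norm_num
  rw [Real.enorm_eq_ofReal (Real.exp_nonneg _)]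

end EntPart

open MeasureTheory
open scoped NNReal

noncomputable section EntPart2

theorem exp_abs_int : Integrable (fun y : ℝ => Real.exp (-|y|)) ∧ ∫ y : ℝ, Real.exp (-|y|) = 2 := by
  have e : ∫ y : ℝ, Real.exp (-|y|) = 2 := by
    rw [integral_comp_abs (f := fun y => Real.exp (-y)), integral_exp_neg_Ioi_zero]; norm_num
  refine ⟨?_, e⟩
  by_contra h
  rw [integral_undef h] at e
  norm_num at e

theorem Dn.moment {V m : Measure ℝ} {h : ℝ → ℝ} [SigmaFinite V]
    [IsProbabilityMeasure m] (H : Dn V m h) (hK : mom m ≠ ⊤) :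
    Integrable (fun y => h y * |y|) V ∧ ∫ y, h y * |y| ∂V = (mom m).toReal := by
  have hi : Integrable (fun y : ℝ => |y|) m := by
    refine ⟨by fun_prop, ?_⟩
    rw [hasFiniteIntegral_iff_enorm]
    simpa [mom, lt_top_iff_ne_top] using hK
  refine ⟨H.integrable_iff _ hi, ?_⟩
  rw [← H.integral, mom]
  have := integral_norm_eq_lintegral_enorm (μ := m) (f := fun y : ℝ => y) (by fun_prop)
  simpa using this

theorem Dn.ent {M : ℝ≥0} (hM : 0 < M) {m : Measure ℝ} {h : ℝ → ℝ}
    [IsProbabilityMeasure m] (H : Dn (M • (volume : Measure ℝ)) m h) (hK : mom m ≠ ⊤) :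
    Integrable (fun y => Real.negMulLog (h y)) (M • (volume : Measure ℝ)) ∧
    Phi (M • (volume : Measure ℝ)) m ≤ Real.log (2 * M) + (mom m).toReal := by
  set V := M • (volume : Measure ℝ)
  have hM' : (0:ℝ) < M := hM
  obtain ⟨i1, e1⟩ := H.moment hK
  obtain ⟨i2, e2⟩ := exp_abs_int
  have i3 : Integrable (fun y : ℝ => Real.exp (-|y|)) V := i2.smul_measure_nnreal
  have e3 : ∫ y, Real.exp (-|y|) ∂V = M * 2 := by
    rw [integral_smul_nnreal_measure, e2]; rfl
  set p : ℝ → ℝ := fun y => Real.exp (-|y|) / (2 * M) with hp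
  have hlog : ∀ y, Real.log (p y) = -|y| - Real.log (2 * M) := by
    intro y
    rw [hp, Real.log_div (Real.exp_ne_zero _) (by positivity), Real.log_exp]
  have ip : Integrable p V := i3.div_const _
  have ep : ∫ y, p y ∂V = 1 := by
    rw [hp, integral_div, e3]; field_simp
  have hpt : ∀ y, Real.negMulLog (h y) ≤ h y * |y| + Real.log (2*M) * h y + p y - h y := by
    intro y
    have := gibbs_pt (h y) (p y) (H.nn y) (by positivity)
    rw [hlog] at this
    linarith
  have iG : Integrable (fun y => h y * |y| + Real.log (2*M) * h y + p y - h y) V :=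
    ((i1.add (H.integrable.const_mul _)).add ip).sub H.integrable
  have iN : Integrable (fun y => Real.negMulLog (h y)) V := by
    refine iG.mono' ((Real.continuous_negMulLog.measurable.comp H.meas).aestronglyMeasurable) ?_
    refine Filter.Eventually.of_forall fun y => ?_
    rw [Real.norm_eq_abs, abs_of_nonneg (H.nml_nonneg y)]
    exact hpt y
  refine ⟨iN, ?_⟩
  rw [H.Phi_eq]
  refine (integral_mono iN iG hpt).trans ?_
  have k1 : Integrable (fun y => h y * |y| + Real.log (2*M) * h y) V :=
    i1.add (H.integrable.const_mul _)
  have k2 : Integrable (fun y => h y * |y| + Real.log (2*M) * h y + p y) V := k1.add ip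
  rw [integral_sub k2 H.integrable, integral_add k1 ip, integral_add i1 (H.integrable.const_mul _), integral_const_mul, H.integral_one, e1, ep]
  linarith

theorem Phi_mono {V m n : Measure ℝ} [SigmaFinite V] [V.IsAddLeftInvariant]
    [IsProbabilityMeasure m] [IsProbabilityMeasure n] {h : ℝ → ℝ} (H : Dn V m h)
    (hi : Integrable (fun y => Real.negMulLog (∫ u, h (y - u) ∂n)) V) :
    Phi V m ≤ Phi V (m.conv n) := by
  have H2 := H.conv n
  have hφ : Measurable fun y => Real.negMulLog (h y) := Real.continuous_negMulLog.measurable.comp H.meas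
  rw [H.Phi_eq, H2.Phi_eq,
    integral_eq_lintegral_of_nonneg_ae (Filter.Eventually.of_forall H.nml_nonneg)
      hφ.aestronglyMeasurable,
    integral_eq_lintegral_of_nonneg_ae (Filter.Eventually.of_forall H2.nml_nonneg)
      hi.aestronglyMeasurable]
  apply ENNReal.toReal_mono
  · have := hi.2
    rw [hasFiniteIntegral_iff_ofReal (Filter.Eventually.of_forall H2.nml_nonneg)] at this
    exact this.ne
  · have hb : ∀ y, Real.negMulLog (h y) ≤ 1 := by
      intro y
      have := gibbs_pt (h y) 1 (H.nn y) one_pos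
      simp at this
      linarith [H.nn y]
    have key : ∀ y, ∫⁻ u, ENNReal.ofReal (Real.negMulLog (h (y - u))) ∂n
        ≤ ENNReal.ofReal (Real.negMulLog (∫ u, h (y - u) ∂n)) := by
      intro y
      have ib := bdd_integrable n _ hφ 1 H.nml_nonneg hb y
      rw [← ofReal_integral_eq_lintegral_ofReal ib
        (Filter.Eventually.of_forall fun u => H.nml_nonneg _)]
      apply ENNReal.ofReal_le_ofReal
      exact Real.concaveOn_negMulLog.le_map_integral Real.continuous_negMulLog.continuousOn
        isClosed_Ici (Filter.Eventually.of_forall fun u => H.nn _)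
        (bdd_integrable n h H.meas 1 H.nn H.le1 y) ib
    have sw := swap_shift V n (fun y => ENNReal.ofReal (Real.negMulLog (h y))) hφ.ennreal_ofReal
      (fun _ => 1) measurable_const
    simp only [mul_one] at sw
    calc _ = ∫⁻ y, (∫⁻ u, ENNReal.ofReal (Real.negMulLog (h (y - u))) ∂n) ∂V := by
          rw [sw]; simp
      _ ≤ _ := lintegral_mono key

theorem pins_int {V a b f : Measure ℝ} [SigmaFinite V]
    [IsProbabilityMeasure a] [IsProbabilityMeasure b] [IsProbabilityMeasure f] {ha hb hf : ℝ → ℝ}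
    (w : ℝ) (hw0 : 0 < w) (hw1 : w < 1)
    (A : Dn V a ha) (B : Dn V b hb) (F : Dn V f hf) (he : ∀ y, hf y = w * ha y + (1-w) * hb y)
    (iA : Integrable (fun y => Real.negMulLog (ha y)) V)
    (iB : Integrable (fun y => Real.negMulLog (hb y)) V)
    (iF : Integrable (fun y => Real.negMulLog (hf y)) V) :
    w * Phi V a + (1-w) * Phi V b + w * (1-w) * (∫ y, |ha y - hb y| ∂V)^2 / 2 ≤ Phi V f := by
  set N := ∫ y, |ha y - hb y| ∂V with hN
  have iN : Integrable (fun y => |ha y - hb y|) V := (A.integrable.sub B.integrable).abs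
  rw [A.Phi_eq, B.Phi_eq, F.Phi_eq]
  have i1 : Integrable (fun y => w * Real.negMulLog (ha y) + (1-w) * Real.negMulLog (hb y)) V :=
    (iA.const_mul w).add (iB.const_mul (1-w))
  have i2 : Integrable (fun y => w * Real.negMulLog (ha y) + (1-w) * Real.negMulLog (hb y)
      + w*(1-w)*N*|ha y - hb y|) V := i1.add (iN.const_mul _)
  have j1 : Integrable (fun y => w*((1-w)*N)^2*(ha y+2*hf y)/6) V :=
    ((A.integrable.add (F.integrable.const_mul 2)).const_mul _).div_const _
  have j2 : Integrable (fun y => (1-w)*(w*N)^2*(hb y+2*hf y)/6) V :=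
    ((B.integrable.add (F.integrable.const_mul 2)).const_mul _).div_const _
  have j3 : Integrable (fun y => w*((1-w)*N)^2*(ha y+2*hf y)/6 + (1-w)*(w*N)^2*(hb y+2*hf y)/6) V :=
    j1.add j2
  have i3 := i2.sub j3
  have := integral_mono i3 iF (fun y => pins2 w N (ha y) (hb y) (hf y) hw0 hw1 (A.nn y) (B.nn y) (he y))
  refine le_trans (le_of_eq ?_) this
  simp only [Pi.sub_apply]
  rw [integral_sub i2 j3, integral_add i1 (iN.const_mul _), integral_add (iA.const_mul w) (iB.const_mul (1-w))]
  rw [integral_add j1 j2, integral_div, integral_div]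
  simp only [integral_const_mul]
  rw [integral_add A.integrable (F.integrable.const_mul 2), integral_add B.integrable (F.integrable.const_mul 2)]
  simp only [integral_const_mul, A.integral_one, B.integral_one, F.integral_one, ← hN]
  ring

theorem tA_sub_norm {V a b : Measure ℝ} [SigmaFinite V]
    [IsProbabilityMeasure a] [IsProbabilityMeasure b] {ha hb : ℝ → ℝ}
    (A : Dn V a ha) (B : Dn V b hb) : ‖tA a - tA b‖ ≤ ∫ y, |ha y - hb y| ∂V := by
  rw [norm_opAlg]
  have iN : Integrable (fun y => |ha y - hb y|) V := (A.integrable.sub B.integrable).abs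
  have h0 : 0 ≤ ∫ y, |ha y - hb y| ∂V := integral_nonneg fun y => abs_nonneg _
  refine ContinuousLinearMap.opNorm_le_bound _ h0 fun f => ?_
  refine CB.norm_le_of _ _ (mul_nonneg h0 (norm_nonneg _)) fun x => ?_
  change ‖(∫ y, f (x+y) ∂a) - (∫ y, f (x+y) ∂b)‖ ≤ _
  rw [A.integral, B.integral, ← integral_sub (A.integrable_iff _ (bcf_integrable a f x))
    (B.integrable_iff _ (bcf_integrable b f x)), ← integral_mul_const]
  refine norm_integral_le_of_norm_le (iN.mul_const _) (Filter.Eventually.of_forall fun y => ?_)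
  rw [← sub_mul, norm_mul, Real.norm_eq_abs]
  gcongr
  exact f.norm_coe_le_norm _

end EntPart2

open MeasureTheory
open scoped NNReal

noncomputable section EntPart3

theorem Phi_bounds {M : ℝ≥0} (hM : 0 < M) (m : Measure ℝ) [IsProbabilityMeasure m]
    (hle : m ≤ M • (volume : Measure ℝ)) (hK : mom m ≠ ⊤) :
    0 ≤ Phi (M • (volume : Measure ℝ)) m ∧
    Phi (M • (volume : Measure ℝ)) m ≤ Real.log (2 * M) + (mom m).toReal := by
  obtain ⟨h, H⟩ := Dn.exists' _ m hle
  exact ⟨H.Phi_nonneg, (H.ent hM hK).2⟩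

theorem mom_Et (t : ℝ) : mom (Et t) = ‖t‖ₑ * mom E1 := mom_sc t E1

theorem mom_conv_ne (m n : Measure ℝ) [IsProbabilityMeasure m] [IsProbabilityMeasure n]
    (h1 : mom m ≠ ⊤) (h2 : mom n ≠ ⊤) : mom (m.conv n) ≠ ⊤ :=
  ne_top_of_le_ne_top (ENNReal.add_ne_top.2 ⟨h1, h2⟩) (mom_conv m n)

theorem mom_Et_ne (t : ℝ) : mom (Et t) ≠ ⊤ := by
  rw [mom_Et]; exact ENNReal.mul_ne_top (by simp) mom_E1

theorem ent_step {M : ℝ≥0} (hM : 0 < M) (ν : Measure ℝ) [IsProbabilityMeasure ν] (hν : mom ν ≠ ⊤)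
    (s t : ℝ) (hs : 0 < s) (hst : s < t) (hle : ν.conv (Et s) ≤ M • (volume : Measure ℝ)) :
    ‖tA ν * (R s * (1 - R t))‖^2 * (1 - s/t) ≤ 2 * (Phi (M • (volume : Measure ℝ)) (ν.conv (Et t))
      - Phi (M • (volume : Measure ℝ)) (ν.conv (Et s))) := by
  set V := M • (volume : Measure ℝ) with hV
  have ht : 0 < t := hs.trans hst
  set w := s / t with hw
  have hw0 : 0 < w := by positivity
  have hw1 : w < 1 := (div_lt_one ht).2 hst
  have hw' : 0 < 1 - w := by linarith
  obtain ⟨ha, A⟩ := Dn.exists' V (ν.conv (Et s)) hle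
  have B := A.conv (Et t)
  set hb : ℝ → ℝ := fun y => ∫ u, ha (y - u) ∂(Et t) with hhb
  have mA : mom (ν.conv (Et s)) ≠ ⊤ := mom_conv_ne _ _ hν (mom_Et_ne s)
  have mB : mom ((ν.conv (Et s)).conv (Et t)) ≠ ⊤ := mom_conv_ne _ _ mA (mom_Et_ne t)
  have mF : mom (ν.conv (Et t)) ≠ ⊤ := mom_conv_ne _ _ hν (mom_Et_ne t)
  have F : Dn V (ν.conv (Et t)) (fun y => w * ha y + (1-w) * hb y) := by
    refine ⟨(A.meas.const_mul _).add (B.meas.const_mul _), ?_, ?_, ?_⟩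
    · intro y
      have := A.nn y; have := B.nn y; positivity
    · intro y
      have := mul_le_mul_of_nonneg_left (A.le1 y) hw0.le
      have := mul_le_mul_of_nonneg_left (B.le1 y) hw'.le
      linarith
    · apply Measure.ext_of_lintegral
      intro f hf
      have hm : Measurable fun y => w * ha y + (1-w) * hb y := (A.meas.const_mul _).add (B.meas.const_mul _)
      have hg : Measurable fun x => ∫⁻ y, f (x + y) ∂(Et t) :=
        (hf.comp measurable_add).lintegral_prod_right'
      rw [lintegral_withDensity_eq_lintegral_mul _ hm.ennreal_ofReal hf]
      have e1 : ∀ y, ENNReal.ofReal (w * ha y + (1-w) * hb y) * f y =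
          ENNReal.ofReal w * (ENNReal.ofReal (ha y) * f y) +
          ENNReal.ofReal (1-w) * (ENNReal.ofReal (hb y) * f y) := by
        intro y
        rw [ENNReal.ofReal_add (mul_nonneg hw0.le (A.nn y)) (mul_nonneg hw'.le (B.nn y)),
          ENNReal.ofReal_mul hw0.le, ENNReal.ofReal_mul hw'.le]
        ring
      simp only [Pi.mul_apply, e1]
      have q1 : Measurable fun y => ENNReal.ofReal (ha y) * f y := A.meas.ennreal_ofReal.mul hf
      have q2 : Measurable fun y => ENNReal.ofReal (hb y) * f y := B.meas.ennreal_ofReal.mul hf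
      rw [lintegral_add_left (q1.const_mul _), lintegral_const_mul _ q1, lintegral_const_mul _ q2,
        ← A.lintegral f hf, ← B.lintegral f hf]
      rw [Measure.conv_assoc, Measure.lintegral_conv hf, Measure.lintegral_conv hf, Measure.lintegral_conv hf]
      have e2 : ∀ x, ∫⁻ y, f (x + y) ∂(Et t) = ENNReal.ofReal w * ∫⁻ y, f (x+y) ∂(Et s)
          + ENNReal.ofReal (1-w) * ∫⁻ y, f (x+y) ∂((Et s).conv (Et t)) := by
        intro x
        have := congrArg (fun m => ∫⁻ y, f (x+y) ∂m) (resolvent_meas s t hs hst.le)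
        simp only [lintegral_add_measure, lintegral_smul_measure, smul_eq_mul] at this
        exact this
      have q3 : Measurable fun x => ∫⁻ y, f (x + y) ∂(Et s) :=
        (hf.comp measurable_add).lintegral_prod_right'
      have q4 : Measurable fun x => ∫⁻ y, f (x + y) ∂((Et s).conv (Et t)) :=
        (hf.comp measurable_add).lintegral_prod_right'
      simp only [e2]
      rw [lintegral_add_left (q3.const_mul _), lintegral_const_mul _ q3, lintegral_const_mul _ q4]
  have iA := (A.ent hM mA).1
  have iB := (B.ent hM mB).1
  have iF := (F.ent hM mF).1
  have key := pins_int w hw0 hw1 A B F (fun y => rfl) iA iB iF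
  have eB : (ν.conv (Et s)).conv (Et t) = (ν.conv (Et t)).conv (Et s) := by
    rw [Measure.conv_assoc, Measure.conv_comm (Et s), ← Measure.conv_assoc]
  have mono : Phi V (ν.conv (Et t)) ≤ Phi V ((ν.conv (Et s)).conv (Et t)) := by
    rw [eB]
    refine Phi_mono F ?_
    rw [eB] at mB
    exact ((F.conv (Et s)).ent hM mB).1
  have hN := tA_sub_norm A B
  have eN : tA (ν.conv (Et s)) - tA ((ν.conv (Et s)).conv (Et t)) = tA ν * (R s * (1 - R t)) := by
    rw [tA_conv (ν.conv (Et s)), tA_conv ν]; simp only [R]; ring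
  rw [eN] at hN
  have h2 := pow_le_pow_left₀ (norm_nonneg _) hN 2
  have h3 := mul_le_mul_of_nonneg_left mono hw'.le
  have h4 := mul_le_mul_of_nonneg_left h2 (mul_nonneg hw0.le hw'.le)
  refine le_of_mul_le_mul_left ?_ hw0
  nlinarith

theorem ent_Yy {M : ℝ≥0} (hM : 0 < M) (ν : Measure ℝ) [IsProbabilityMeasure ν] (hν : mom ν ≠ ⊤)
    (s t : ℝ) (hs : 0 < s) (hst : s < t) (hle : ν.conv (Et s) ≤ M • (volume : Measure ℝ)) :
    ‖Yy t * tA ν‖^2 * (1 - s/t) ≤ 2 * (Phi (M • (volume : Measure ℝ)) (ν.conv (Et t))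
      - Phi (M • (volume : Measure ℝ)) (ν.conv (Et s))) := by
  refine le_trans ?_ (ent_step hM ν hν s t hs hst hle)
  have ht : 0 < t := hs.trans hst
  have hw0 : 0 < s / t := by positivity
  have hw1 : s / t < 1 := (div_lt_one ht).2 hst
  have hw' : 0 ≤ 1 - s / t := by linarith
  have e : Yy t * tA ν = (tA ν * (R s * (1 - R t))) * ((s/t) • (1 : opAlg) + (1 - s/t) • R t) := by
    have := resolvent_le s t hs hst.le
    have h2 : Yy t = (1 - R t) * R t := by rw [Yy, mul_comm]
    rw [h2]
    nth_rw 2 [this]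
    simp only [Algebra.smul_def]; ring
  have h1 : ‖(s/t) • (1 : opAlg) + (1 - s/t) • R t‖ ≤ 1 := by
    refine (norm_add_le _ _).trans ?_
    rw [norm_smul, norm_smul, Real.norm_of_nonneg hw0.le, Real.norm_of_nonneg hw']
    have := mul_le_mul_of_nonneg_left one_norm hw0.le
    have := mul_le_mul_of_nonneg_left (R_norm t) hw'
    linarith
  have h2 : ‖Yy t * tA ν‖ ≤ ‖tA ν * (R s * (1 - R t))‖ := by
    rw [e]
    refine (norm_mul_le _ _).trans ?_
    exact mul_le_of_le_one_right (norm_nonneg _) h1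
  gcongr

end EntPart3

open MeasureTheory
open scoped NNReal

noncomputable section DigPart

def lam (q : ℕ) : ℝ := ((q : ℝ) - 1) / q

def D0 (q : ℕ) : Measure ℝ :=
  ∑ i : Fin (q - 1), (((q : ENNReal) - 1))⁻¹ • Measure.dirac (((i : ℕ) : ℝ) + 1)

theorem lintegral_D0 (q : ℕ) (f : ℝ → ENNReal) (hf : Measurable f) :
    ∫⁻ y, f y ∂(D0 q) = ∑ i : Fin (q - 1), ((q : ENNReal) - 1)⁻¹ * f (((i : ℕ) : ℝ) + 1) := by
  unfold D0
  rw [lintegral_finsetSum_measure]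
  refine Finset.sum_congr rfl fun i _ => ?_
  rw [lintegral_smul_measure, lintegral_dirac' _ hf, smul_eq_mul]

theorem cq (q : ℕ) (hq : 17 ≤ q) : (q : ENNReal) - 1 = ((q - 1 : ℕ) : ENNReal) := by
  rw [ENNReal.natCast_sub]; simp

theorem cqR (q : ℕ) (hq : 17 ≤ q) : (q : ENNReal) - 1 = ENNReal.ofReal ((q : ℝ) - 1) := by
  rw [cq q hq, ← ENNReal.ofReal_natCast, Nat.cast_sub (by omega)]; simp

theorem D0_prob (q : ℕ) (hq : 17 ≤ q) : IsProbabilityMeasure (D0 q) := by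
  constructor
  have := lintegral_D0 q (fun _ => 1) measurable_const
  simp only [lintegral_const, one_mul, mul_one, Finset.sum_const, Finset.card_univ,
    Fintype.card_fin, nsmul_eq_mul] at this
  rw [this, cq q hq]
  apply ENNReal.mul_inv_cancel
  · have : q - 1 ≠ 0 := by omega
    exact_mod_cast this
  · exact ENNReal.natCast_ne_top _

def muJ (q : ℕ) : ℕ → Measure ℝ
  | 0 => Measure.dirac 0
  | J + 1 => (muJ q J).conv (sc (lam q ^ J) (D0 q))

theorem muJ_prob (q : ℕ) (hq : 17 ≤ q) (J : ℕ) : IsProbabilityMeasure (muJ q J) := by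
  have := D0_prob q hq
  induction J with
  | zero => unfold muJ; infer_instance
  | succ J ih => unfold muJ; infer_instance

theorem muJ_add (q : ℕ) (hq : 17 ≤ q) (a b : ℕ) :
    muJ q (a + b) = (muJ q a).conv (sc (lam q ^ a) (muJ q b)) := by
  have := D0_prob q hq
  have := muJ_prob q hq
  induction b with
  | zero =>
    have : sc (lam q ^ a) (Measure.dirac 0) = Measure.dirac 0 := by
      unfold sc; rw [Measure.map_dirac' (by fun_prop)]; simp
    simp only [add_zero, muJ, this]
    rw [Measure.conv_dirac_zero]
  | succ b ih =>
    rw [← add_assoc, muJ, ih, muJ, sc_conv, sc_sc, Measure.conv_assoc, pow_add]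

theorem mu_D0 (q : ℕ) (_hq17 : 17 ≤ q)
    (μ : Measure ℝ) (hμ : IsProbabilityMeasure μ)
    (hss : μ = ∑ i : Fin (q - 1),
      (((q : ENNReal) - 1))⁻¹ •
        Measure.map (fun x : ℝ => ((q : ℝ) - 1) / q * x + ((i : ℕ) + 1)) μ) :
    μ = (D0 q).conv (sc (lam q) μ) := by
  have := D0_prob q _hq17
  nth_rw 1 [hss]
  apply Measure.ext_of_lintegral
  intro f hf
  have hg : Measurable fun x => ∫⁻ y, f (x + y) ∂(sc (lam q) μ) :=
        (hf.comp measurable_add).lintegral_prod_right'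
  rw [Measure.lintegral_conv hf, lintegral_D0 _ _ hg, lintegral_finsetSum_measure]
  refine Finset.sum_congr rfl fun i _ => ?_
  rw [lintegral_smul_measure, smul_eq_mul, lintegral_map hf (by fun_prop), sc,
    lintegral_map (by fun_prop) (by fun_prop)]
  congr 2; ext y; rw [add_comm]; rfl

theorem mu_J (q : ℕ) (hq17 : 17 ≤ q) (μ : Measure ℝ) [IsProbabilityMeasure μ]
    (h : μ = (D0 q).conv (sc (lam q) μ)) (J : ℕ) :
    μ = (muJ q J).conv (sc (lam q ^ J) μ) := by
  have := D0_prob q hq17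
  have := muJ_prob q hq17
  induction J with
  | zero => simp only [muJ, pow_zero, sc_one]; rw [Measure.dirac_zero_conv]
  | succ J ih =>
    rw [muJ, Measure.conv_assoc, pow_succ, ← sc_sc, ← sc_conv, ← h]; exact ih

def hJ (q J : ℕ) : ℝ := q / (q:ℝ) ^ J

theorem dig_inj (q : ℕ) (hp : q.Prime) (J : ℕ) :
    Function.Injective (fun p : ℤ × Fin (q - 1) => (q:ℤ) * p.1 + ((q:ℤ) - 1)^J * (((p.2 : ℕ) : ℤ) + 1)) := by
  rintro ⟨k, i⟩ ⟨k', i'⟩ h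
  simp only at h
  have hq0 : (0:ℤ) < q := by exact_mod_cast hp.pos
  have h1 : (q:ℤ) ∣ ((q:ℤ) - 1)^J * (((i : ℕ) : ℤ) - ((i' : ℕ) : ℤ)) := ⟨k' - k, by linear_combination h⟩
  have hc : IsCoprime (q:ℤ) (((q:ℤ) - 1)^J) := by
    apply IsCoprime.pow_right
    exact ⟨1, -1, by ring⟩
  have h2 := hc.dvd_of_dvd_mul_left h1
  have hi := i.2; have hi' := i'.2
  have h3 : ((i : ℕ) : ℤ) - ((i' : ℕ) : ℤ) = 0 := by
    apply Int.eq_zero_of_abs_lt_dvd h2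
    rw [abs_lt]; constructor <;> omega
  have h4 : i = i' := by apply Fin.ext; omega
  subst h4
  have : (q:ℤ) * k = q * k' := by linarith
  have := mul_left_cancel₀ hq0.ne' this
  rw [this]

theorem lattice (q : ℕ) (hp : q.Prime) (hq : 17 ≤ q) (J : ℕ) : ∀ (f : ℝ → ENNReal), Measurable f →
    ∫⁻ y, f y ∂(muJ q J) ≤ (((q : ENNReal) - 1)⁻¹) ^ J * ∑' k : ℤ, f (hJ q J * k) := by
  have := D0_prob q hq
  have := muJ_prob q hq
  have hq0 : (q:ℝ) ≠ 0 := by exact_mod_cast hp.ne_zero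
  induction J with
  | zero =>
    intro f hf
    simp only [muJ, pow_zero, one_mul]
    rw [lintegral_dirac' _ hf]
    refine le_trans ?_ (ENNReal.le_tsum (0:ℤ))
    simp
  | succ J ih =>
    intro f hf
    have hg : Measurable fun x => ∫⁻ y, f (x + y) ∂(sc (lam q ^ J) (D0 q)) :=
        (hf.comp measurable_add).lintegral_prod_right'
    rw [muJ, Measure.lintegral_conv hf]
    refine (ih _ hg).trans ?_
    rw [pow_succ, mul_assoc]
    gcongr
    have e : ∀ k : ℤ, ∫⁻ y, f (hJ q J * k + y) ∂(sc (lam q ^ J) (D0 q)) =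
       ((q : ENNReal) - 1)⁻¹ * ∑ i : Fin (q - 1), 
        f (hJ q (J+1) * (((q:ℤ) * k + ((q:ℤ) - 1)^J * (((i : ℕ) : ℤ) + 1) : ℤ) : ℝ)) := by
      intro k
      rw [sc, lintegral_map (by fun_prop) (by fun_prop), lintegral_D0 _ _ (by fun_prop), Finset.mul_sum]
      refine Finset.sum_congr rfl fun i _ => ?_
      congr 2
      simp only [hJ, lam, div_pow]
      push_cast
      field_simp
      ring
    simp_rw [e]
    rw [ENNReal.tsum_mul_left]
    refine mul_le_mul_right ?_ _
    have e2 : ∀ k : ℤ, ∑ i : Fin (q - 1), 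
        f (hJ q (J+1) * (((q:ℤ) * k + ((q:ℤ) - 1)^J * (((i : ℕ) : ℤ) + 1) : ℤ) : ℝ)) =
        ∑' i : Fin (q - 1), 
        f (hJ q (J+1) * (((q:ℤ) * k + ((q:ℤ) - 1)^J * (((i : ℕ) : ℤ) + 1) : ℤ) : ℝ)) := 
      fun k => (tsum_fintype _).symm
    simp_rw [e2]
    rw [← ENNReal.tsum_prod (f := fun (k : ℤ) (i : Fin (q-1)) => f (hJ q (J+1) * (((q:ℤ) * k + ((q:ℤ) - 1)^J * (((i : ℕ) : ℤ) + 1) : ℤ) : ℝ)))]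
    exact ENNReal.tsum_comp_le_tsum_of_injective (dig_inj q hp J) (fun n : ℤ => f (hJ q (J+1) * n))

theorem mom_D0 (q : ℕ) (hq : 17 ≤ q) : mom (D0 q) ≤ q := by
  have := D0_prob q hq
  unfold mom
  rw [lintegral_D0 _ _ (by fun_prop)]
  have h1 : ∀ i : Fin (q-1), ‖((i:ℕ):ℝ) + 1‖ₑ ≤ (q : ENNReal) := by
    intro i
    have := i.2
    rw [Real.enorm_eq_ofReal (by positivity), ← ENNReal.ofReal_natCast]
    apply ENNReal.ofReal_le_ofReal
    have h : (i:ℕ) + 1 ≤ q := by omega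
    exact_mod_cast h
  calc _ ≤ ∑ i : Fin (q-1), ((q : ENNReal) - 1)⁻¹ * (q : ENNReal) := by
        gcongr with i; exact h1 i
    _ = ∫⁻ y, (q : ENNReal) ∂(D0 q) := (lintegral_D0 q (fun _ => (q:ENNReal)) measurable_const).symm
    _ = q := by simp

theorem mom_muJ (q : ℕ) (hq : 17 ≤ q) (J : ℕ) : mom (muJ q J) ≤ ENNReal.ofReal ((q:ℝ)^2) := by
  have := D0_prob q hq
  have := muJ_prob q hq
  have hq1 : (17:ℝ) ≤ q := by exact_mod_cast hq
  have hl : 0 ≤ lam q := by unfold lam; apply div_nonneg <;> linarith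
  induction J with
  | zero => unfold mom muJ; rw [lintegral_dirac' _ (by fun_prop)]; simp
  | succ J ih =>
    have e1 : muJ q 1 = D0 q := by
      simp only [muJ, pow_zero, sc_one]; rw [Measure.dirac_zero_conv]
    rw [add_comm, muJ_add q hq, e1, pow_one]
    refine (mom_conv _ _).trans ?_
    rw [mom_sc]
    calc _ ≤ (q : ENNReal) + ‖lam q‖ₑ * ENNReal.ofReal ((q:ℝ)^2) := by
          gcongr; exact mom_D0 q hq
      _ = ENNReal.ofReal (q + lam q * q^2) := by
          rw [Real.enorm_eq_ofReal hl, ← ENNReal.ofReal_natCast, ← ENNReal.ofReal_mul hl,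
            ENNReal.ofReal_add (by positivity) (by positivity)]
      _ ≤ _ := by
          apply ENNReal.ofReal_le_ofReal
          unfold lam
          have : ((q:ℝ) - 1)/q * q^2 = (q-1)*q := by field_simp
          rw [this]; nlinarith

end DigPart

open MeasureTheory
open scoped NNReal

noncomputable section DigPart2

def es (s : ℝ) (z : ℝ) : ENNReal :=
  Set.indicator (Set.Ioi 0) (fun z => ENNReal.ofReal (s⁻¹ * Real.exp (-(z / s)))) z

theorem es_meas (s : ℝ) : Measurable (es s) := by
  unfold es
  exact Measurable.indicator (by fun_prop) measurableSet_Ioi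

theorem lintegral_Et (s : ℝ) (hs : 0 < s) (f : ℝ → ENNReal) (hf : Measurable f) :
    ∫⁻ y, f y ∂(Et s) = ∫⁻ z, es s z * f z := by
  have hes := es_meas s
  unfold Et sc E1
  rw [lintegral_map hf (by fun_prop), lintegral_withDensity_eq_lintegral_mul _ (by fun_prop) (by fun_prop),
    ← lintegral_indicator measurableSet_Ioi]
  have h1 : ∀ y, (Set.Ioi (0:ℝ)).indicator (fun a => ((fun y => ENNReal.ofReal (Real.exp (-y))) * fun a => f (s * a)) a) y
      = ENNReal.ofReal s * (es s (s * y) * f (s * y)) := by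
    intro y
    by_cases hy : 0 < y
    · have hsy : 0 < s * y := by positivity
      rw [Set.indicator_of_mem (show y ∈ Set.Ioi 0 from hy), es,
        Set.indicator_of_mem (show s * y ∈ Set.Ioi 0 from hsy), ← mul_assoc, ← ENNReal.ofReal_mul hs.le]
      simp only [Pi.mul_apply]
      congr 2
      field_simp
    · have hsy : ¬ 0 < s * y := by
        intro h; exact hy (pos_of_mul_pos_right h hs.le)
      rw [Set.indicator_of_notMem (show y ∉ Set.Ioi 0 from hy), es,
        Set.indicator_of_notMem (show s * y ∉ Set.Ioi 0 from hsy)]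
      simp
  simp_rw [h1]
  rw [lintegral_const_mul _ (by fun_prop), 
    ← lintegral_map (f := fun z => es s z * f z) (g := fun y => s * y) (by fun_prop) (by fun_prop),
    Real.map_volume_mul_left hs.ne', lintegral_smul_measure, smul_eq_mul, ← mul_assoc,
    ← ENNReal.ofReal_mul hs.le, abs_of_pos (by positivity), mul_inv_cancel₀ hs.ne', ENNReal.ofReal_one, one_mul]

theorem geom_bd (x : ℝ) (hx : 0 < x) : (1 - Real.exp (-x))⁻¹ ≤ 1 + 1 / x := by
  have h1 : Real.exp (-x) < 1 := by rw [Real.exp_lt_one_iff]; linarith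
  have h2 : Real.exp (-x) * (x + 1) ≤ 1 := by
    have := Real.add_one_le_exp x
    have h3 : Real.exp (-x) * Real.exp x = 1 := by rw [← Real.exp_add]; simp
    nlinarith [Real.exp_pos (-x)]
  rw [inv_le_comm₀ (by linarith) (by positivity)]
  have : (1 + 1/x)⁻¹ = 1 - 1/(x+1) := by field_simp; ring
  rw [this]
  have : Real.exp (-x) ≤ 1/(x+1) := by rw [le_div_iff₀ (by positivity)]; exact h2
  linarith

theorem es_sum (s h z : ℝ) (hs : 0 < s) (hh : 0 < h) :
    ∑' k : ℤ, es s (z - h * k) ≤ ENNReal.ofReal (1/s + 1/h) := by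
  set k0 := ⌊z / h⌋ with hk0
  have hz : h * k0 ≤ z := by
    have := Int.floor_le (z / h)
    rw [le_div_iff₀ hh] at this
    rw [mul_comm]; exact this
  have inj : Function.Injective (fun n : ℕ => k0 - (n:ℤ)) := by
    intro a b hab
    simp only at hab
    omega
  have hsup : Function.support (fun k : ℤ => es s (z - h * k)) ⊆ Set.range (fun n : ℕ => k0 - (n:ℤ)) := by
    intro k hk
    simp only [Function.mem_support] at hk
    have h1 : z - h * k ∈ Set.Ioi (0:ℝ) := by
      by_contra hc
      exact hk (Set.indicator_of_notMem hc _)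
    have h1 : 0 < z - h * k := h1
    have : k ≤ k0 := by
      apply Int.le_floor.2
      rw [le_div_iff₀ hh]; linarith
    refine ⟨(k0 - k).toNat, ?_⟩
    simp only
    omega
  rw [← inj.tsum_eq hsup]
  have hr : Real.exp (-(h/s)) < 1 := by
    rw [Real.exp_lt_one_iff]; have : 0 < h / s := by positivity
    linarith
  have hb : ∀ n : ℕ, es s (z - h * ((k0 - (n:ℤ) : ℤ) : ℝ)) ≤ ENNReal.ofReal (s⁻¹ * Real.exp (-(h/s))^n) := by
    intro n
    unfold es
    refine (Set.indicator_le_self _ _ _).trans ?_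
    apply ENNReal.ofReal_le_ofReal
    rw [← Real.exp_nat_mul]
    gcongr
    push_cast
    have : n * -(h / s) = -(h * n / s) := by ring
    rw [this]
    gcongr
    linarith
  refine (ENNReal.tsum_le_tsum hb).trans ?_
  have hsum : Summable fun n : ℕ => s⁻¹ * Real.exp (-(h/s))^n :=
    (summable_geometric_of_lt_one (Real.exp_nonneg _) hr).mul_left _
  rw [← ENNReal.ofReal_tsum_of_nonneg (fun n => by positivity) hsum]
  apply ENNReal.ofReal_le_ofReal
  rw [tsum_mul_left, tsum_geometric_of_lt_one (Real.exp_nonneg _) hr]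
  have := geom_bd (h/s) (by positivity)
  calc _ ≤ s⁻¹ * (1 + 1/(h/s)) := by gcongr
    _ = _ := by field_simp

def MJ (q J : ℕ) : ℝ≥0 := Real.toNNReal (2 / lam q ^ J)

theorem lam_pos (q : ℕ) (hq : 17 ≤ q) : 0 < lam q := by
  have hq1 : (17:ℝ) ≤ q := by exact_mod_cast hq
  unfold lam; apply div_pos <;> linarith

theorem MJ_pos (q : ℕ) (hq : 17 ≤ q) (J : ℕ) : 0 < MJ q J := by
  have := lam_pos q hq
  unfold MJ; rw [Real.toNNReal_pos]; positivity

theorem MJ_coe (q : ℕ) (hq : 17 ≤ q) (J : ℕ) : (MJ q J : ℝ) = 2 / lam q ^ J := by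
  have := lam_pos q hq
  unfold MJ; rw [Real.coe_toNNReal]; positivity

theorem dens_bd (q : ℕ) (hp : q.Prime) (hq : 17 ≤ q) (J : ℕ) (s : ℝ) (hs : ((q:ℝ)^J)⁻¹ ≤ s) :
    (muJ q J).conv (Et s) ≤ (MJ q J) • (volume : Measure ℝ) := by
  have := muJ_prob q hq J
  have hq1 : (17:ℝ) ≤ q := by exact_mod_cast hq
  have hs0 : 0 < s := lt_of_lt_of_le (by positivity) hs
  have hes := es_meas s
  have hh : 0 < hJ q J := by unfold hJ; positivity
  have key : ∀ z, ∫⁻ x, es s (z - x) ∂(muJ q J) ≤ (MJ q J : ENNReal) := by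
    intro z
    refine (lattice q hp hq J (fun x => es s (z - x)) (by fun_prop)).trans ?_
    refine (mul_le_mul_right (es_sum s (hJ q J) z hs0 hh) _).trans ?_
    have hq' : (0:ℝ) < q - 1 := by linarith
    rw [cqR q hq, ← ENNReal.ofReal_inv_of_pos hq', ← ENNReal.ofReal_pow (by positivity),
      ← ENNReal.ofReal_mul (by positivity)]
    change _ ≤ ENNReal.ofReal (2 / lam q ^ J)
    apply ENNReal.ofReal_le_ofReal
    have h1 : 1 / s ≤ (q:ℝ)^J := by
      rw [div_le_iff₀ hs0]
      have h := mul_le_mul_of_nonneg_left hs (show 0 ≤ (q:ℝ)^J by positivity)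
      rwa [mul_inv_cancel₀ (by positivity)] at h
    have h2 : 1 / hJ q J ≤ (q:ℝ)^J := by
      unfold hJ
      rw [one_div_div]
      apply div_le_self (by positivity); linarith
    calc _ ≤ ((q:ℝ) - 1)⁻¹ ^ J * ((q:ℝ)^J + (q:ℝ)^J) := by gcongr
      _ = _ := by unfold lam; rw [div_pow, inv_pow]; field_simp; ring
  rw [Measure.conv_comm]
  refine Measure.le_iff.2 fun A hA => ?_
  rw [← lintegral_indicator_one hA, Measure.lintegral_conv (by exact measurable_one.indicator hA)]
  set g : ℝ → ENNReal := A.indicator 1 with hg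
  have hgm : Measurable g := measurable_one.indicator hA
  have hg2 : Measurable fun x => ∫⁻ y, g (x + y) ∂(muJ q J) :=
    (hgm.comp measurable_add).lintegral_prod_right'
  rw [lintegral_Et s hs0 _ hg2]
  have e1 : ∀ z, es s z * ∫⁻ y, g (z + y) ∂(muJ q J) = ∫⁻ y, es s z * g (z + y) ∂(muJ q J) := by
    intro z; rw [lintegral_const_mul _ (by fun_prop)]
  simp_rw [e1]
  rw [lintegral_lintegral_swap (by fun_prop), ← swap_shift volume (muJ q J) (es s) hes g hgm]
  calc _ ≤ ∫⁻ y, (MJ q J : ENNReal) * g y := by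
        gcongr with y; exact key y
    _ = _ := by
        rw [lintegral_const_mul _ hgm, hg, lintegral_indicator_one hA]; rfl

end DigPart2

open MeasureTheory
open scoped NNReal

noncomputable section BlockPart

def bb (q J : ℕ) (hq : 17 ≤ q) (t : ℝ) (a : ℕ) : ℝ :=
  ‖Yy (t / lam q ^ a) * @tA (muJ q J) (muJ_prob q hq J)‖

theorem bb_nonneg (q J : ℕ) (hq : 17 ≤ q) (t : ℝ) (a : ℕ) : 0 ≤ bb q J hq t a := norm_nonneg _

theorem lam_lt (q : ℕ) (hq : 17 ≤ q) : lam q < 1 := by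
  have hq1 : (17:ℝ) ≤ q := by exact_mod_cast hq
  unfold lam; rw [div_lt_one (by linarith)]; linarith

def CC (q : ℕ) : ℝ := Real.log 4 + (q:ℝ)^2 + (mom E1).toReal

theorem bb_sum (q : ℕ) (hp : q.Prime) (hq : 17 ≤ q) (J L : ℕ) (t : ℝ) (ht : ((q:ℝ)^J)⁻¹ ≤ t * lam q)
    (hL : t * lam q / lam q ^ L ≤ 1) :
    ∑ a ∈ Finset.range L, bb q J hq t a ^ 2 ≤ 2 * q * (J * Real.log (1 / lam q) + CC q) := by
  have := muJ_prob q hq J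
  have hl := lam_pos q hq
  have hl1 := lam_lt q hq
  have hq1 : (17:ℝ) ≤ q := by exact_mod_cast hq
  have hM := MJ_pos q hq J
  have htl : 0 < t * lam q := lt_of_lt_of_le (by positivity) ht
  have ht0 : 0 < t := pos_of_mul_pos_left htl hl.le
  have hmom : mom (muJ q J) ≠ ⊤ := ne_top_of_le_ne_top ENNReal.ofReal_ne_top (mom_muJ q hq J)
  set θ : ℕ → ℝ := fun a => Phi ((MJ q J) • (volume : Measure ℝ)) ((muJ q J).conv (Et (t * lam q / lam q ^ a))) with hθ
  have hge : ∀ a : ℕ, ((q:ℝ)^J)⁻¹ ≤ t * lam q / lam q ^ a := by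
    intro a
    refine ht.trans ?_
    rw [le_div_iff₀ (by positivity)]
    exact mul_le_of_le_one_right htl.le (pow_le_one₀ hl.le hl1.le)
  have hstep : ∀ a, bb q J hq t a ^ 2 ≤ 2 * q * (θ (a+1) - θ a) := by
    intro a
    have h := ent_Yy hM (muJ q J) hmom (t * lam q / lam q ^ a) (t / lam q ^ a) (by positivity)
      (by gcongr; exact mul_lt_of_lt_one_right ht0 hl1) (dens_bd q hp hq J _ (hge a))
    have e1 : t * lam q / lam q ^ a / (t / lam q ^ a) = lam q := by field_simp
    have e2 : 1 - lam q = 1 / q := by unfold lam; field_simp; ring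
    have e3 : t / lam q ^ a = t * lam q / lam q ^ (a+1) := by field_simp; ring
    rw [e1, e2] at h
    have h2 : ‖Yy (t / lam q ^ a) * tA (muJ q J)‖ ^ 2 * (1 / q) = bb q J hq t a ^ 2 / q := by
      unfold bb; ring
    rw [h2, e3, div_le_iff₀ (by linarith)] at h
    simp only [hθ]
    linarith
  calc _ ≤ ∑ a ∈ Finset.range L, 2 * q * (θ (a+1) - θ a) := Finset.sum_le_sum fun a _ => hstep a
    _ = 2 * q * (θ L - θ 0) := by rw [← Finset.mul_sum, Finset.sum_range_sub]
    _ ≤ _ := by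
      gcongr
      have h0 := (Phi_bounds hM _ (dens_bd q hp hq J _ (hge 0)) (mom_conv_ne _ _ hmom (mom_Et_ne _))).1
      have h1 := (Phi_bounds hM _ (dens_bd q hp hq J _ (hge L)) (mom_conv_ne _ _ hmom (mom_Et_ne _))).2
      have h2 : (mom ((muJ q J).conv (Et (t * lam q / lam q ^ L)))).toReal ≤ (q:ℝ)^2 + (mom E1).toReal := by
        have : mom ((muJ q J).conv (Et (t * lam q / lam q ^ L))) ≤ ENNReal.ofReal ((q:ℝ)^2) + mom E1 := by
          refine (mom_conv _ _).trans (add_le_add (mom_muJ q hq J) ?_)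
          rw [mom_Et, Real.enorm_eq_ofReal (by positivity)]
          refine mul_le_of_le_one_left zero_le ?_
          rw [ENNReal.ofReal_le_one]; exact hL
        have h := ENNReal.toReal_mono (ENNReal.add_ne_top.2 ⟨ENNReal.ofReal_ne_top, mom_E1⟩) this
        rwa [ENNReal.toReal_add ENNReal.ofReal_ne_top mom_E1, ENNReal.toReal_ofReal (by positivity)] at h
      have h3 : Real.log (2 * (MJ q J : ℝ)) = Real.log 4 + J * Real.log (1 / lam q) := by
        rw [MJ_coe q hq, show 2 * (2 / lam q ^ J) = 4 * (1 / lam q)^J by rw [div_pow]; field_simp; norm_num,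
          Real.log_mul (by norm_num) (by positivity), Real.log_pow]
      rw [h3] at h1
      simp only [hθ, CC]
      linarith

theorem sum_range_mul' (f : ℕ → ℝ) (n J : ℕ) :
    ∑ a ∈ Finset.range (n * J), f a = ∑ o ∈ Finset.range J, ∑ i ∈ Finset.range n, f (o + i * J) := by
  rw [Finset.sum_comm]
  induction n with
  | zero => simp
  | succ n ih =>
    rw [Nat.succ_mul, Finset.sum_range_add, ih, Finset.sum_range_succ]
    congr 1
    exact Finset.sum_congr rfl fun o _ => by rw [add_comm]

theorem amgm40 (b : ℕ → ℝ) (hb : ∀ i, 0 ≤ b i) (hs : ∑ i ∈ Finset.range 40, b i ^ 2 ≤ 69/32) :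
    ∏ i ∈ Finset.range 40, b i ≤ (69/32/40 : ℝ)^20 := by
  have h := Real.geom_mean_le_arith_mean (Finset.range 40) (fun _ => 1) (fun i => b i ^ 2)
    (fun _ _ => zero_le_one) (by simp) (fun i _ => sq_nonneg _)
  simp only [Real.rpow_one, one_mul, Finset.sum_const, Finset.card_range, nsmul_eq_mul, mul_one] at h
  have hP : 0 ≤ ∏ i ∈ Finset.range 40, b i ^ 2 := Finset.prod_nonneg fun i _ => sq_nonneg _
  have h1 := pow_le_pow_left₀ (Real.rpow_nonneg hP _) h 40
  rw [← Real.rpow_natCast, ← Real.rpow_mul hP] at h1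
  norm_num at h1
  rw [Finset.prod_pow] at h1
  have h2 : (∏ i ∈ Finset.range 40, b i)^2 ≤ ((69/32/40 : ℝ)^20)^2 := by
    refine h1.trans ?_
    rw [← pow_mul]
    apply pow_le_pow_left₀
    · have := Finset.sum_nonneg (s := Finset.range 40) fun i _ => sq_nonneg (b i)
      positivity
    · linarith
  exact (pow_le_pow_iff_left₀ (Finset.prod_nonneg fun i _ => hb i) (by positivity) two_ne_zero).1 h2

theorem block_prod (q : ℕ) (hq : 17 ≤ q) (μ : Measure ℝ) [IsProbabilityMeasure μ]
    (h : μ = (D0 q).conv (sc (lam q) μ)) (J o : ℕ) (t : ℝ) (n : ℕ) : ∀ k : ℕ,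
    ‖Yy t ^ (n + k) * tA (sc (lam q ^ o) μ)‖ ≤ (∏ i ∈ Finset.range n, bb q J hq t (o + i * J)) *
      ‖Yy t ^ k * tA (sc (lam q ^ (o + n * J)) μ)‖ := by
  have hl := lam_pos q hq
  induction n with
  | zero => intro k; simp
  | succ n ih =>
    intro k
    have := muJ_prob q hq J
    rw [show n + 1 + k = n + (k+1) by ring]
    refine (ih (k+1)).trans ?_
    rw [Finset.prod_range_succ, mul_assoc]
    refine mul_le_mul_of_nonneg_left ?_ (Finset.prod_nonneg fun i _ => bb_nonneg _ _ _ _ _)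
    have e1 : sc (lam q ^ (o + n * J)) μ = (sc (lam q ^ (o + n*J)) (muJ q J)).conv (sc (lam q ^ (o + (n+1)*J)) μ) := by
      conv_lhs => rw [mu_J q hq μ h J]
      rw [sc_conv, sc_sc, ← pow_add]
      congr 3; ring
    have e2 : tA (sc (lam q ^ (o + n * J)) μ) = tA (sc (lam q ^ (o + n*J)) (muJ q J)) * tA (sc (lam q ^ (o + (n+1)*J)) μ) := by
      rw [← tA_conv]; exact tA_congr e1
    rw [e2]
    have e3 : ∀ A B : opAlg, Yy t ^ (k+1) * (A * B) = (Yy t ^ 1 * A) * (Yy t ^ k * B) := by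
      intro A B; ring
    rw [e3]
    refine (norm_mul_le _ _).trans ?_
    refine mul_le_mul_of_nonneg_right ?_ (norm_nonneg _)
    have := Yy_scale (lam q ^ (o + n * J)) t (by positivity) 1 (muJ q J)
    rw [pow_one (Yy (t / lam q ^ (o + n * J)))] at this
    exact this

theorem block (q : ℕ) (hp : q.Prime) (hq : 17 ≤ q) (μ : Measure ℝ) [IsProbabilityMeasure μ]
    (h : μ = (D0 q).conv (sc (lam q) μ)) (J : ℕ) (hJ : 0 < J) (t : ℝ)
    (ht : ((q:ℝ)^J)⁻¹ ≤ t * lam q) (hL : t * lam q / lam q ^ (40 * J) ≤ 1)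
    (hC : 2 * q * (J * Real.log (1 / lam q) + CC q) ≤ 69 / 32 * J) :
    ∃ N ≤ 41 * J, ∀ k, ‖Yy t ^ (40 + k) * tA μ‖ ≤
      (69/32/40 : ℝ)^20 * ‖Yy (t / lam q ^ N) ^ k * tA μ‖ := by
  have hl := lam_pos q hq
  have hs := (bb_sum q hp hq J (40 * J) t ht hL).trans hC
  rw [sum_range_mul'] at hs
  obtain ⟨o, ho, hb⟩ : ∃ o ∈ Finset.range J, ∑ i ∈ Finset.range 40, bb q J hq t (o + i*J) ^ 2 ≤ 69/32 := by
    apply Finset.exists_le_of_sum_le (by simpa using hJ.ne')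
    refine hs.trans (le_of_eq ?_)
    simp; ring
  have hoJ := Finset.mem_range.1 ho
  refine ⟨o + 40 * J, by omega, fun k => ?_⟩
  have := muJ_prob q hq o
  have e2 : tA μ = tA (muJ q o) * tA (sc (lam q ^ o) μ) := by
    rw [← tA_conv]; exact tA_congr (mu_J q hq μ h o)
  have e3 : Yy t ^ (40 + k) * tA μ = tA (muJ q o) * (Yy t ^ (40 + k) * tA (sc (lam q ^ o) μ)) := by
    rw [e2]; ring
  rw [e3]
  calc _ ≤ ‖tA (muJ q o)‖ * ‖Yy t ^ (40 + k) * tA (sc (lam q ^ o) μ)‖ := norm_mul_le _ _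
    _ ≤ ‖Yy t ^ (40 + k) * tA (sc (lam q ^ o) μ)‖ := mul_le_of_le_one_left (norm_nonneg _) (tA_norm _)
    _ ≤ _ := block_prod q hq μ h J o t 40 k
    _ ≤ _ := by
      apply mul_le_mul _ _ (norm_nonneg _) (by positivity)
      · exact amgm40 _ (fun i => bb_nonneg _ _ _ _ _) hb
      · exact Yy_scale _ _ (by positivity) k μ

set_option exponentiation.threshold 3000 in
theorem num_ineq (q : ℕ) (hq : 17 ≤ q) : 41 * Real.log (1 / lam q) < 22/25 * Real.log q := by
  have hq1 : (17:ℝ) ≤ q := by exact_mod_cast hq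
  have h1 : Real.log (1 / lam q) ≤ Real.log (17/16) := by
    apply Real.log_le_log (by have := lam_pos q hq; positivity)
    unfold lam
    rw [one_div_div, div_le_div_iff₀ (by linarith) (by norm_num)]; linarith
  have h2 : Real.log 17 ≤ Real.log q := Real.log_le_log (by norm_num) hq1
  have h3 : Real.log ((17:ℝ)^1003) < Real.log ((16:ℝ)^1025) := by
    apply Real.log_lt_log (by positivity)
    norm_num
  rw [Real.log_pow, Real.log_pow] at h3
  rw [Real.log_div (x := 17) (y := 16) (by norm_num) (by norm_num)] at h1
  push_cast at h3
  linarith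

theorem iter (q : ℕ) (hp : q.Prime) (hq : 17 ≤ q) (μ : Measure ℝ) [IsProbabilityMeasure μ]
    (h : μ = (D0 q).conv (sc (lam q) μ)) :
    ∃ n0 : ℝ, 0 ≤ n0 ∧ ∀ (B : ℕ) (x : ℝ), n0 * (25 / 3) ^ B ≤ x →
      ‖Yy (Real.exp (-x)) ^ (40 * B) * tA μ‖ ≤ ((69 / 32 / 40 : ℝ) ^ 20) ^ B := by
  have hl := lam_pos q hq
  have hl1 := lam_lt q hq
  have hq1 : (17:ℝ) ≤ q := by exact_mod_cast hq
  set ℓ := Real.log (1 / lam q) with hℓ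
  have hℓ0 : 0 < ℓ := Real.log_pos (by rw [lt_div_iff₀ hl]; linarith)
  have hQ : 0 < Real.log q := Real.log_pos (by linarith)
  have hnum := num_ineq q hq
  rw [← hℓ] at hnum
  have hC0 : 0 < CC q := by
    unfold CC
    have : 0 < Real.log 4 := Real.log_pos (by norm_num)
    positivity
  have hℓq : 2 * q * ℓ ≤ 68/32 := by
    have h1 : ℓ ≤ 1 / lam q - 1 := Real.log_le_sub_one_of_pos (by positivity)
    have h2 : 1 / lam q - 1 = 1 / ((q:ℝ) - 1) := by
      have : (q:ℝ) - 1 ≠ 0 := by linarith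
      unfold lam; field_simp; ring
    rw [h2, le_div_iff₀ (by linarith)] at h1
    nlinarith
  have hlame : lam q = Real.exp (-ℓ) := by
    rw [hℓ, one_div, Real.log_inv, neg_neg, Real.exp_log hl]
  set δ := 22/25 * Real.log q - 41 * ℓ with hδ
  have hδ0 : 0 < δ := by linarith
  set n0 := 64 * q * CC q * Real.log q + 41 * ℓ * (ℓ + Real.log q) / δ with hn0
  have hp1 : 0 < 64 * q * CC q * Real.log q := by positivity
  have hp2 : 0 < 41 * ℓ * (ℓ + Real.log q) / δ := by positivity
  have hstep : ∀ x : ℝ, n0 ≤ x → ∃ x' : ℝ, 3/25 * x ≤ x' ∧ ∀ k,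
      ‖Yy (Real.exp (-x)) ^ (40 + k) * tA μ‖ ≤
      (69/32/40 : ℝ)^20 * ‖Yy (Real.exp (-x')) ^ k * tA μ‖ := by
    intro x hx
    have hx0 : 0 < x := by linarith
    set J := ⌈(x + ℓ) / Real.log q⌉₊ with hJ
    have hJ1 : x + ℓ ≤ J * Real.log q := by
      have := Nat.le_ceil ((x + ℓ) / Real.log q)
      rwa [div_le_iff₀ hQ] at this
    have hJ2 : J * Real.log q < x + ℓ + Real.log q := by
      have := Nat.ceil_lt_add_one (a := (x + ℓ) / Real.log q) (by positivity)
      have h2 := mul_lt_mul_of_pos_right this hQ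
      rwa [add_mul, div_mul_cancel₀ _ hQ.ne', one_mul] at h2
    have hJ0 : 0 < J := Nat.ceil_pos.2 (by positivity)
    have hJ64 : 64 * q * CC q ≤ J := by
      have : 64 * q * CC q * Real.log q ≤ J * Real.log q := by linarith
      exact le_of_mul_le_mul_right this hQ
    have h41 : 41 * J * ℓ ≤ 22/25 * x := by
      have hx2 : 41 * ℓ * (ℓ + Real.log q) ≤ δ * x := by
        have : 41 * ℓ * (ℓ + Real.log q) / δ ≤ x := by linarith
        rw [div_le_iff₀ hδ0] at this; linarith
      have h3 : 41 * ℓ * (J * Real.log q) ≤ 41 * ℓ * (x + ℓ + Real.log q) := by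
        gcongr
      have h4 : (41 * J * ℓ) * Real.log q ≤ (22/25 * x) * Real.log q := by
        rw [hδ] at hx2; nlinarith
      exact le_of_mul_le_mul_right h4 hQ
    have hpow : ∀ n : ℕ, lam q ^ n = Real.exp (-(n * ℓ)) := by
      intro n; rw [hlame, ← Real.exp_nat_mul]; congr 1; ring
    have hqJ : (q:ℝ)^J = Real.exp (J * Real.log q) := by
      rw [Real.exp_nat_mul, Real.exp_log (by linarith)]
    obtain ⟨N, hN, hk⟩ := block q hp hq μ h J hJ0 (Real.exp (-x))
      (by rw [hqJ, ← Real.exp_neg, hlame, ← Real.exp_add]; apply Real.exp_le_exp.2; linarith)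
      (by
        rw [hpow, hlame, ← Real.exp_add, ← Real.exp_sub, Real.exp_le_one_iff]; push_cast
        have : 0 ≤ (J:ℝ) * ℓ := by positivity
        linarith)
      (by
        rw [← hℓ]
        have : 2 * q * ℓ * J ≤ 68/32 * J := by gcongr
        nlinarith)
    refine ⟨x - N * ℓ, ?_, ?_⟩
    · have hN' : (N:ℝ) ≤ 41 * J := by exact_mod_cast hN
      have : N * ℓ ≤ 41 * J * ℓ := by gcongr
      linarith
    · intro k
      have := hk k
      rwa [hpow, ← Real.exp_sub, show -x - -(N * ℓ) = -(x - N * ℓ) by ring] at this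
  refine ⟨n0, by linarith, ?_⟩
  intro B
  induction B with
  | zero => intro x hx; simpa using tA_norm μ
  | succ B ih =>
    intro x hx
    have hn : 0 ≤ n0 := by linarith
    have hx0 : n0 ≤ x := by
      refine le_trans ?_ hx
      exact le_mul_of_one_le_right hn (one_le_pow₀ (by norm_num))
    obtain ⟨x', h1, h2⟩ := hstep x hx0
    have h3 := h2 (40 * B)
    rw [show 40 * (B+1) = 40 + 40 * B by ring, pow_succ, mul_comm (((69 / 32 / 40 : ℝ) ^ 20) ^ B)]
    refine h3.trans ?_
    gcongr
    apply ih
    rw [pow_succ] at hx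
    linarith

end BlockPart

open MeasureTheory
open scoped BoundedContinuousFunction

noncomputable section FinPart

theorem final_ac (μ : Measure ℝ) [IsProbabilityMeasure μ] (x d : ℕ → ℝ)
    (hx : Filter.Tendsto x Filter.atTop Filter.atTop) (hd : Summable d)
    (hb : ∀ B, ‖R (Real.exp (-x B)) * tA μ - R (Real.exp (-x (B+1))) * tA μ‖ ≤ d B) :
    μ ≪ volume := by
  set m : ℕ → Measure ℝ := fun B => μ.conv (Et (Real.exp (-x B))) with hm
  have hmp : ∀ B, IsProbabilityMeasure (m B) := fun B => by simp only [hm]; infer_instance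
  have hac : ∀ B, m B ≪ volume := by
    intro B
    have hE : Et (Real.exp (-x B)) ≪ volume := by
      refine Measure.AbsolutelyContinuous.mk fun A hA h0 => ?_
      rw [← lintegral_indicator_one hA, lintegral_Et _ (Real.exp_pos _) _ (measurable_one.indicator hA)]
      refine (lintegral_congr_ae ?_).trans lintegral_zero
      have : ∀ᵐ y, y ∉ A := measure_eq_zero_iff_ae_notMem.1 h0
      filter_upwards [this] with y hy
      simp [hy]
    exact Measure.conv_absolutelyContinuous hE
  set δ : ℕ → ℝ := fun B => ∑' n, d (B + n) with hδ
  have hδ0 : Filter.Tendsto δ Filter.atTop (nhds 0) := by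
    have := tendsto_sum_nat_add d
    simpa [hδ, add_comm] using this
  have hbd : ∀ (f : CB) (B : ℕ), |(∫ y, f y ∂μ) - ∫ y, f y ∂(m B)| ≤ ‖f‖ * δ B := by
    intro f B
    set F : ℕ → ℝ := fun B => ((R (Real.exp (-x B)) * tA μ : opAlg) : OpX) f 0 with hF
    have hFe : ∀ B, F B = ∫ y, f y ∂(m B) := by
      intro B
      have e : ((R (Real.exp (-x B)) * tA μ : opAlg) : OpX) = opT (m B) := by
        rw [mul_comm, R, ← tA_conv]; rfl
      simp only [hF]
      rw [e, opT_apply]; simp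
    have hFd : ∀ B, dist (F B) (F (B+1)) ≤ ‖f‖ * d B := by
      intro B
      have h1 : F B - F (B+1) = ((R (Real.exp (-x B)) * tA μ - R (Real.exp (-x (B+1))) * tA μ : opAlg) : OpX) f 0 := rfl
      rw [Real.dist_eq, h1, ← Real.norm_eq_abs]
      refine (CB.norm_coe_le_norm _ _).trans ?_
      refine (ContinuousLinearMap.le_opNorm _ _).trans ?_
      rw [← norm_opAlg, mul_comm]
      exact mul_le_mul_of_nonneg_left (hb B) (norm_nonneg _)
    have hFl : Filter.Tendsto F Filter.atTop (nhds (∫ y, f y ∂μ)) := by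
      have ht : Filter.Tendsto (fun B => Real.exp (-x B)) Filter.atTop (nhds 0) :=
        Real.tendsto_exp_neg_atTop_nhds_zero.comp hx
      have := Et_tendsto (opT μ f) _ ht
      have e : (opT μ f) 0 = ∫ y, f y ∂μ := by rw [opT_apply]; simp
      rw [e] at this
      exact this
    have := dist_le_tsum_of_dist_le_of_tendsto (fun B => ‖f‖ * d B) hFd (hd.mul_left _) hFl B
    rw [tsum_mul_left, hFe, dist_comm, Real.dist_eq] at this
    exact this
  have hclosed : ∀ K : Set ℝ, IsClosed K → volume K = 0 → μ K = 0 := by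
    intro K hK hK0
    have h1 : ∀ ε : ℝ, 0 < ε → ∀ B, μ.real K ≤ ε + δ B := by
      intro ε hε B
      have hmK : m B K = 0 := hac B hK0
      obtain ⟨U, hKU, hUo, hU⟩ := K.exists_isOpen_lt_of_lt (μ := m B) (ENNReal.ofReal ε) (by rw [hmK]; simpa using hε)
      obtain ⟨f, hf0, hf1, hf2⟩ := exists_continuous_zero_one_of_isClosed hUo.isClosed_compl hK
        (by rw [Set.disjoint_compl_left_iff_subset]; exact hKU)
      let g : CB := BoundedContinuousFunction.ofNormedAddCommGroup f f.continuous 1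
        (fun y => by rw [Real.norm_eq_abs, abs_of_nonneg (hf2 y).1]; exact (hf2 y).2)
      have hg : ∀ y, g y = f y := fun y => rfl
      have hgn : ‖g‖ ≤ 1 := CB.norm_le_of _ _ zero_le_one fun y => by
        rw [hg, Real.norm_eq_abs, abs_of_nonneg (hf2 y).1]; exact (hf2 y).2
      have hi : ∀ (n : Measure ℝ) [IsProbabilityMeasure n], Integrable (fun y => g y) n := by
        intro n _; simpa using bcf_integrable n g 0
      have h2 := hbd g B
      have h3 : μ.real K ≤ ∫ y, g y ∂μ := by
        rw [← integral_indicator_one hK.measurableSet]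
        refine integral_mono ((integrable_const 1).indicator hK.measurableSet) (hi μ) fun y => ?_
        by_cases hy : y ∈ K
        · simp [hy, hg, hf1 hy]
        · simp [hy, hg, (hf2 y).1]
      have h4 : ∫ y, g y ∂(m B) ≤ ε := by
        have h5 : ∫ y, g y ∂(m B) ≤ (m B).real U := by
          rw [← integral_indicator_one hUo.measurableSet]
          refine integral_mono (hi (m B)) ((integrable_const 1).indicator hUo.measurableSet) fun y => ?_
          by_cases hy : y ∈ U
          · simp [hy, hg, (hf2 y).2]
          · have : f y = 0 := hf0 hy
            simp [hy, hg, this]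
        refine h5.trans ?_
        rw [Measure.real]
        exact ENNReal.toReal_le_of_le_ofReal hε.le hU.le
      have hδnn : 0 ≤ δ B := tsum_nonneg fun n => (norm_nonneg _).trans (hb _)
      have h6 : ‖g‖ * δ B ≤ δ B := mul_le_of_le_one_left hδnn hgn
      have := (abs_le.1 h2).2
      linarith
    have h2 : ∀ ε : ℝ, 0 < ε → μ.real K ≤ ε := by
      intro ε hε
      have ht : Filter.Tendsto (fun B => ε + δ B) Filter.atTop (nhds (ε + 0)) := hδ0.const_add ε
      rw [add_zero] at ht
      exact ge_of_tendsto' ht (h1 ε hε)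
    have h3 : μ.real K ≤ 0 := le_of_forall_pos_le_add fun ε hε => by simpa using h2 ε hε
    have h4 : μ.real K = 0 := le_antisymm h3 measureReal_nonneg
    exact (measureReal_eq_zero_iff).1 h4
  refine Measure.AbsolutelyContinuous.mk fun A hA h0 => ?_
  rw [hA.measure_eq_iSup_isCompact]
  simp only [ENNReal.iSup_eq_zero]
  intro K hKA hK
  exact hclosed K hK.isClosed (measure_mono_null hKA h0)

end FinPart

theorem statement18 (q : ℕ) (hq : q.Prime) (hq17 : 17 ≤ q)
    (μ : Measure ℝ) (hμ : IsProbabilityMeasure μ)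
    (hss : μ = ∑ i : Fin (q - 1),
      (((q : ENNReal) - 1))⁻¹ •
        Measure.map (fun x : ℝ => ((q : ℝ) - 1) / q * x + ((i : ℕ) + 1)) μ) :
    μ ≪ volume := by
  have h := mu_D0 q hq17 μ hμ hss
  obtain ⟨n0, hn0, H⟩ := iter q hq hq17 μ h
  obtain ⟨x, d, hx, hd, hb⟩ := cauchy_part (A := opAlg) (fun u => R (Real.exp u)) (tA μ)
    R_deriv (fun u => R_norm _) (fun u => R_norm' _) (tA_norm μ) n0 hn0 H
  exact final_ac μ x d hx hd hb
end

section
/- Let p be a prime with p ≡ 3 (mod 4), let I = (p) be the ideal generated by p in the ring of Gaussian integers ℤ[i] (which is a prime ideal), let a ∈ ℤ[i] with a ∉ I, and set α = a/p ∈ ℂ. Let A ⊆ ℤ[i] be a finite set whose elements are pairwise incongruent modulo I. Then: (1) if k ≥ 0 and x_0, …, x_k, y_0, …, y_k ∈ A satisfy ∑_{j=0}^k x_j α^j = ∑_{j=0}^k y_j α^j, then x_j = y_j for all j; (2) for every k ≥ 1, any two distinct complex numbers of the form ∑_{j=0}^{k−1} x_j α^j with all x_j ∈ A have distance at least p^{−(k−1)}.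 -/
open GaussianInt

theorem key19 (p : ℕ) (hp : p ≠ 0) (a : GaussianInt) (α : ℂ) (hα : α = (a : ℂ) / p) (k : ℕ)
    (x : Fin (k + 1) → GaussianInt) :
    (p : ℂ) ^ k * ∑ j, (x j : ℂ) * α ^ (j : ℕ) =
      ((∑ j : Fin (k + 1), x j * a ^ (j : ℕ) * (p : GaussianInt) ^ (k - j : ℕ) : GaussianInt) : ℂ) := by
  have hp' : (p : ℂ) ≠ 0 := by exact_mod_cast hp
  rw [map_sum, Finset.mul_sum]
  refine Finset.sum_congr rfl fun j _ => ?_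
  have hj : (j : ℕ) ≤ k := Nat.lt_succ_iff.mp j.2
  have h : (p : ℂ) ^ k = (p : ℂ) ^ (k - j : ℕ) * (p : ℂ) ^ (j : ℕ) := by
    rw [← pow_add, Nat.sub_add_cancel hj]
  rw [map_mul, map_mul, map_pow, map_pow, map_natCast, h, hα, div_pow]
  field_simp

theorem norm19 (z : GaussianInt) (hz : (z : ℂ) ≠ 0) : 1 ≤ ‖(z : ℂ)‖ := by
  have h0 : z ≠ 0 := by
    rintro rfl
    simp at hz
  have h1 : (0 : ℤ) < z.norm := GaussianInt.norm_pos.mpr h0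
  have h2 : (1 : ℝ) ≤ (z.norm : ℝ) := by exact_mod_cast h1
  rw [GaussianInt.intCast_real_norm, Complex.normSq_eq_norm_sq] at h2
  nlinarith [norm_nonneg (z : ℂ)]

theorem inj19 (p : ℕ) (hp : p.Prime) (hp3 : p % 4 = 3)
    (a : GaussianInt) (ha : ¬ (p : GaussianInt) ∣ a)
    (α : ℂ) (hα : α = (a : ℂ) / p)
    (A : Finset GaussianInt)
    (hA : ∀ x ∈ A, ∀ y ∈ A, x ≠ y → ¬ (p : GaussianInt) ∣ (x - y)) (k : ℕ) :
    ∀ x y : Fin k → GaussianInt,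
      (∀ j, x j ∈ A) → (∀ j, y j ∈ A) →
      ∑ j, (x j : ℂ) * α ^ (j : ℕ) = ∑ j, (y j : ℂ) * α ^ (j : ℕ) → x = y := by
  haveI : Fact p.Prime := ⟨hp⟩
  have hpr : Prime (p : GaussianInt) := GaussianInt.prime_of_nat_prime_of_mod_four_eq_three p hp3
  induction k with
  | zero => intro x y _ _ _; exact Subsingleton.elim _ _
  | succ k ih =>
    intro x y hx hy h
    have e : (∑ j : Fin (k + 1), x j * a ^ (j : ℕ) * (p : GaussianInt) ^ (k - j : ℕ)) =
        ∑ j : Fin (k + 1), y j * a ^ (j : ℕ) * (p : GaussianInt) ^ (k - j : ℕ) := by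
      rw [← GaussianInt.toComplex_inj, ← key19 p hp.ne_zero a α hα, ← key19 p hp.ne_zero a α hα, h]
    have d : ∀ z : Fin (k + 1) → GaussianInt, (p : GaussianInt) ∣
        ∑ j : Fin k, z j.castSucc * a ^ (j : ℕ) * (p : GaussianInt) ^ (k - j : ℕ) := by
      intro z
      refine Finset.dvd_sum fun j _ => Dvd.dvd.mul_left (dvd_pow_self _ ?_) _
      have := j.2
      omega
    have hl : x (Fin.last k) = y (Fin.last k) := by
      by_contra hne
      refine hA _ (hx _) _ (hy _) hne ?_
      rw [Fin.sum_univ_castSucc, Fin.sum_univ_castSucc] at e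
      simp only [Fin.val_castSucc, Fin.val_last, Nat.sub_self, pow_zero, mul_one] at e
      have hd : (p : GaussianInt) ∣ (x (Fin.last k) - y (Fin.last k)) * a ^ k := by
        have := dvd_sub (d y) (d x)
        convert this using 1
        linear_combination e
      exact (hpr.dvd_or_dvd hd).resolve_right fun h' => ha (hpr.dvd_of_dvd_pow h')
    rw [Fin.sum_univ_castSucc, Fin.sum_univ_castSucc, hl] at h
    have h' := ih (fun j => x j.castSucc) (fun j => y j.castSucc) (fun j => hx _) (fun j => hy _)
      (by simpa using h)
    funext j
    refine Fin.lastCases hl (fun i => congrFun h' i) j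

theorem statement19 (p : ℕ) (hp : p.Prime) (hp3 : p % 4 = 3)
    (a : GaussianInt) (ha : ¬ (p : GaussianInt) ∣ a)
    (α : ℂ) (hα : α = (a : ℂ) / p)
    (A : Finset GaussianInt)
    (hA : ∀ x ∈ A, ∀ y ∈ A, x ≠ y → ¬ (p : GaussianInt) ∣ (x - y)) :
    (∀ (k : ℕ) (x y : Fin (k + 1) → GaussianInt),
      (∀ j, x j ∈ A) → (∀ j, y j ∈ A) →
      ∑ j, (x j : ℂ) * α ^ (j : ℕ) = ∑ j, (y j : ℂ) * α ^ (j : ℕ) → x = y) ∧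
    (∀ k : ℕ, 1 ≤ k → ∀ x y : Fin k → GaussianInt,
      (∀ j, x j ∈ A) → (∀ j, y j ∈ A) →
      (∑ j, (x j : ℂ) * α ^ (j : ℕ)) ≠ (∑ j, (y j : ℂ) * α ^ (j : ℕ)) →
      ((p : ℝ) ^ (k - 1))⁻¹ ≤
        dist (∑ j, (x j : ℂ) * α ^ (j : ℕ)) (∑ j, (y j : ℂ) * α ^ (j : ℕ))) := by
  refine ⟨fun k => inj19 p hp hp3 a ha α hα A hA (k + 1), ?_⟩
  intro k hk x y _ _ hne
  obtain ⟨k, rfl⟩ : ∃ m, k = m + 1 := ⟨k - 1, by omega⟩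
  have hp0 : (0 : ℝ) < (p : ℝ) ^ k := pow_pos (by exact_mod_cast hp.pos) _
  have hpc : (p : ℂ) ^ k ≠ 0 := pow_ne_zero _ (by exact_mod_cast hp.ne_zero)
  have hkx := key19 p hp.ne_zero a α hα k x
  have hky := key19 p hp.ne_zero a α hα k y
  have hs := (congrArg₂ (· - ·) hkx hky)
  simp only [← mul_sub, ← GaussianInt.toComplex_sub] at hs
  have hn := norm19 _ (hs ▸ mul_ne_zero hpc (sub_ne_zero.mpr hne))
  rw [← hs, norm_mul, norm_pow, Complex.norm_natCast] at hn
  rw [dist_eq_norm, Nat.add_sub_cancel, inv_le_iff_one_le_mul₀' hp0]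
  exact hn
end
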